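/- arXiv:1703.09863 — 2 statements merged into one kernel-verified Lean document; each statement's English description precedes it below -/
import Mathlib

section
/- Let Ω ⊂ ℝ² be a bounded convex domain, G its Dirichlet Green function, and for k ≥ 2 and positive constants κ₁, …, κ_k define the Kirchhoff–Routh function W(x₁,…,x_k) = −Σ_{i≠j} κ_i κ_j G(x_i, x_j) + Σ_i κ_i² φ(x_i) on the set of k-tuples of distinct points of Ω, where φ(x) = H(x,x) is the Robin function. Then W has no critical point. -/
open Real

noncomputable abbrev E2 := EuclideanSpace ℝ (Fin 2)

/-- The Laplacian in two variables. -/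
noncomputable def lap (f : E2 → ℝ) (x : E2) : ℝ :=
  ∑ i : Fin 2,
    fderiv ℝ (fun z => fderiv ℝ f z (EuclideanSpace.single i 1)) x (EuclideanSpace.single i 1)


/-- Abstract system of Green functions on a planar domain: `(z - b) * E b z` behaves like a
conformal map to the disc sending `b` to `0`. -/
structure GreenSys (U : Set ℂ) (E : ℂ → ℂ → ℂ) : Prop where
  op : IsOpen U
  bdd : Bornology.IsBounded U
  conv : Convex ℝ U
  diff : ∀ b ∈ U, DifferentiableOn ℂ (E b) U
  ne : ∀ b ∈ U, ∀ z ∈ U, E b z ≠ 0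
  bdry : ∀ b ∈ U, ∀ ε > (0:ℝ), ∃ K ⊆ U, IsCompact K ∧
    ∀ z ∈ U, z ∉ K → 1 - ε ≤ ‖(z - b) * E b z‖ ∧ ‖(z - b) * E b z‖ ≤ 1 + ε

/-- The candidate conformal map. -/
def FF (E : ℂ → ℂ → ℂ) (b z : ℂ) : ℂ := (z - b) * E b z

theorem max_princ {U : Set ℂ} (hU : IsOpen U) (hb : Bornology.IsBounded U) {f : ℂ → ℂ}
    (hf : DifferentiableOn ℂ f U)
    (h : ∀ ε > (0:ℝ), ∃ K ⊆ U, IsCompact K ∧ ∀ z ∈ U, z ∉ K → ‖f z‖ ≤ 1 + ε) :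
    ∀ z ∈ U, ‖f z‖ ≤ 1 := by
  intro z hz
  refine le_of_forall_pos_le_add fun ε hε => ?_
  obtain ⟨K, hKU, hK, hKf⟩ := h ε hε
  by_cases hzK : z ∈ K
  swap
  · exact hKf z hz hzK
  obtain ⟨V, hVo, hKV, hVU, hVc⟩ := exists_open_between_and_isCompact_closure hK hU hKU
  have hVb : Bornology.IsBounded V := hb.subset (subset_closure.trans hVU)
  refine Complex.norm_le_of_forall_mem_frontier_norm_le hVb ?_ ?_ (subset_closure (hKV hzK))
  · apply DifferentiableOn.diffContOnCl
    exact hf.mono hVU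
  · intro w hw
    refine hKf w (hVU hw.1) fun hwK => hw.2 ?_
    rw [hVo.interior_eq]; exact hKV hwK

namespace GreenSys

theorem diffF {U : Set ℂ} {E : ℂ → ℂ → ℂ} (S : GreenSys U E) {b : ℂ} (hb : b ∈ U) : DifferentiableOn ℂ (FF E b) U :=
  (differentiableOn_id.sub_const b).mul (S.diff b hb)

theorem F_self {U : Set ℂ} {E : ℂ → ℂ → ℂ} (S : GreenSys U E) (b : ℂ) : FF E b b = 0 := by simp [FF]

theorem F_ne {U : Set ℂ} {E : ℂ → ℂ → ℂ} (S : GreenSys U E) {b z : ℂ} (hb : b ∈ U) (hz : z ∈ U) (h : z ≠ b) : FF E b z ≠ 0 :=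
  mul_ne_zero (sub_ne_zero.2 h) (S.ne b hb z hz)

theorem F_le {U : Set ℂ} {E : ℂ → ℂ → ℂ} (S : GreenSys U E) {b : ℂ} (hb : b ∈ U) : ∀ z ∈ U, ‖FF E b z‖ ≤ 1 := by
  apply max_princ S.op S.bdd (S.diffF hb)
  intro ε hε
  obtain ⟨K, h1, h2, h3⟩ := S.bdry b hb ε hε
  exact ⟨K, h1, h2, fun z hz hzK => (h3 z hz hzK).2⟩

theorem F_lt {U : Set ℂ} {E : ℂ → ℂ → ℂ} (S : GreenSys U E) {b : ℂ} (hb : b ∈ U) {z : ℂ} (hz : z ∈ U) : ‖FF E b z‖ < 1 := by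
  refine lt_of_le_of_ne (S.F_le hb z hz) fun h => ?_
  have := Complex.norm_eqOn_of_isPreconnected_of_isMaxOn S.conv.isPreconnected S.op (S.diffF hb) hz
    (fun w hw => by simpa [h] using S.F_le hb w hw) hb
  simp [S.F_self, h] at this

/-- Schwarz lemma. -/
theorem schwarz {U : Set ℂ} {E : ℂ → ℂ → ℂ} (S : GreenSys U E) {b : ℂ} (hb : b ∈ U) {k : ℂ → ℂ} (hk : DifferentiableOn ℂ k U)
    (hk1 : ∀ z ∈ U, ‖k z‖ ≤ 1) (hk0 : k b = 0) :
    ∀ z ∈ U, ‖dslope k b z / E b z‖ ≤ 1 := by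
  have hnb : U ∈ nhds b := S.op.mem_nhds hb
  apply max_princ S.op S.bdd
  · exact ((Complex.differentiableOn_dslope hnb).2 hk).div (S.diff b hb) (S.ne b hb)
  intro ε hε
  obtain ⟨K, h1, h2, h3⟩ := S.bdry b hb (ε / (1 + ε)) (by positivity)
  refine ⟨insert b K, Set.insert_subset hb h1, h2.insert b, fun z hz hzK => ?_⟩
  simp only [Set.mem_insert_iff, not_or] at hzK
  have h4 := (h3 z hz hzK.2).1
  have h5 : dslope k b z / E b z = k z / ((z - b) * E b z) := by
    rw [dslope_of_ne _ hzK.1, slope_def_field, hk0, sub_zero, div_div]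
  have h6 : 1 - ε / (1 + ε) = 1 / (1 + ε) := by field_simp; ring
  rw [h6] at h4
  rw [h5, norm_div, div_le_iff₀ (lt_of_lt_of_le (by positivity) h4)]
  calc ‖k z‖ ≤ 1 := hk1 z hz
    _ = (1 + ε) * (1 / (1 + ε)) := by field_simp
    _ ≤ _ := by gcongr

theorem schwarz_F {U : Set ℂ} {E : ℂ → ℂ → ℂ} (S : GreenSys U E) {b : ℂ} (hb : b ∈ U) {k : ℂ → ℂ} (hk : DifferentiableOn ℂ k U)
    (hk1 : ∀ z ∈ U, ‖k z‖ ≤ 1) (hk0 : k b = 0) {z : ℂ} (hz : z ∈ U) :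
    ‖k z‖ ≤ ‖FF E b z‖ := by
  have := S.schwarz hb hk hk1 hk0 z hz
  rw [norm_div, div_le_one (norm_pos_iff.2 (S.ne b hb z hz))] at this
  have h2 : k z = (z - b) * dslope k b z := by
    have := sub_smul_dslope k b z
    rw [hk0, sub_zero] at this
    rw [← this, smul_eq_mul]
  rw [h2, FF, norm_mul, norm_mul]
  gcongr

theorem schwarz_deriv {U : Set ℂ} {E : ℂ → ℂ → ℂ} (S : GreenSys U E) {b : ℂ} (hb : b ∈ U) {k : ℂ → ℂ} (hk : DifferentiableOn ℂ k U)
    (hk1 : ∀ z ∈ U, ‖k z‖ ≤ 1) (hk0 : k b = 0) :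
    ‖deriv k b‖ ≤ ‖E b b‖ := by
  have := S.schwarz hb hk hk1 hk0 b hb
  rwa [norm_div, div_le_one (norm_pos_iff.2 (S.ne b hb b hb)), dslope_same] at this

end GreenSys

theorem mob_den_ne {c w : ℂ} (hc : ‖c‖ < 1) (hw : ‖w‖ < 1) :
    1 - (starRingEnd ℂ) c * w ≠ 0 := by
  intro h
  have h1 : ‖(starRingEnd ℂ) c * w‖ = 1 := by
    rw [← sub_eq_zero.1 h]; simp
  rw [norm_mul, RCLike.norm_conj] at h1
  nlinarith [norm_nonneg c, norm_nonneg w]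

theorem mob_le {c w : ℂ} (hc : ‖c‖ < 1) (hw : ‖w‖ < 1) :
    ‖(w - c) / (1 - (starRingEnd ℂ) c * w)‖ ≤ 1 := by
  rw [norm_div, div_le_one (norm_pos_iff.2 (mob_den_ne hc hw))]
  have h : ‖1 - (starRingEnd ℂ) c * w‖ ^ 2 - ‖w - c‖ ^ 2 = (1 - ‖c‖ ^ 2) * (1 - ‖w‖ ^ 2) := by
    simp only [← Complex.normSq_eq_norm_sq, Complex.normSq_apply]
    simp
    ring
  have : 0 ≤ (1 - ‖c‖ ^ 2) * (1 - ‖w‖ ^ 2) :=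
    mul_nonneg (by nlinarith [norm_nonneg c]) (by nlinarith [norm_nonneg w])
  exact le_of_sq_le_sq (by linarith) (norm_nonneg _)

namespace GreenSys

theorem mob_diff {U : Set ℂ} {E : ℂ → ℂ → ℂ} (S : GreenSys U E) {a b : ℂ} (ha : a ∈ U) (hb : b ∈ U) : DifferentiableOn ℂ
    (fun z => (FF E a z - FF E a b) / (1 - (starRingEnd ℂ) (FF E a b) * FF E a z)) U := by
  have := S.diffF ha
  refine DifferentiableOn.div (this.sub_const _) ((this.const_mul _).const_sub _) ?_
  exact fun z hz => mob_den_ne (S.F_lt ha hb) (S.F_lt ha hz)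

theorem symm_le {U : Set ℂ} {E : ℂ → ℂ → ℂ} (S : GreenSys U E) {a b : ℂ} (ha : a ∈ U) (hb : b ∈ U) : ‖FF E a b‖ ≤ ‖FF E b a‖ := by
  have := S.schwarz_F hb (S.mob_diff ha hb)
    (fun z hz => mob_le (S.F_lt ha hb) (S.F_lt ha hz)) (by simp) ha
  simpa [S.F_self] using this

theorem F_symm {U : Set ℂ} {E : ℂ → ℂ → ℂ} (S : GreenSys U E) {a b : ℂ} (ha : a ∈ U) (hb : b ∈ U) : ‖FF E a b‖ = ‖FF E b a‖ :=
  le_antisymm (S.symm_le ha hb) (S.symm_le hb ha)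

theorem mob_dslope {U : Set ℂ} {E : ℂ → ℂ → ℂ} (S : GreenSys U E) {a b : ℂ} (ha : a ∈ U) (hb : b ∈ U) {z : ℂ} (hz : z ∈ U) :
    ‖dslope (fun z => (FF E a z - FF E a b) / (1 - (starRingEnd ℂ) (FF E a b) * FF E a z)) b z‖
      = ‖E b z‖ := by
  set k := (fun z => (FF E a z - FF E a b) / (1 - (starRingEnd ℂ) (FF E a b) * FF E a z)) with hk
  have hkd : DifferentiableOn ℂ k U := S.mob_diff ha hb
  have hk0 : k b = 0 := by simp [hk]
  have hs := S.schwarz hb hkd (fun z hz => mob_le (S.F_lt ha hb) (S.F_lt ha hz)) hk0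
  have hne := norm_pos_iff.2 (S.ne b hb z hz)
  have hqd : DifferentiableOn ℂ (fun z => dslope k b z / E b z) U :=
    ((Complex.differentiableOn_dslope (S.op.mem_nhds hb)).2 hkd).div (S.diff b hb) (S.ne b hb)
  have h1 : ‖dslope k b a / E b a‖ = 1 := by
    have hnea := norm_pos_iff.2 (S.ne b hb a ha)
    rcases eq_or_ne a b with rfl | hab
    · have : k = FF E a := by
        funext z; simp [hk, S.F_self]
      rw [this, dslope_same]
      have hd : HasDerivAt (FF E a) (E a a) a := by
        have := ((hasDerivAt_id a).sub_const a).mul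
          ((S.diff a ha).differentiableAt (S.op.mem_nhds ha)).hasDerivAt
        simpa using! this
      rw [hd.deriv, div_self (S.ne a ha a ha)]; simp
    · rw [dslope_of_ne _ hab, slope_def_field, hk0, sub_zero, div_div]
      have : k a = - FF E a b := by simp [hk, S.F_self]
      rw [this, norm_div, norm_neg, S.F_symm ha hb]
      exact div_self (norm_ne_zero_iff.2 (S.F_ne hb ha hab))
  have := Complex.norm_eqOn_of_isPreconnected_of_isMaxOn S.conv.isPreconnected S.op hqd ha
    (fun w hw => by simpa only [Set.mem_ofPred_eq, Function.comp, h1] using hs w hw) hz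
  simp only [Function.comp, Function.const, h1] at this
  rwa [norm_div, div_eq_one_iff_eq hne.ne'] at this

theorem mob_eq {U : Set ℂ} {E : ℂ → ℂ → ℂ} (S : GreenSys U E) {a b : ℂ} (ha : a ∈ U) (hb : b ∈ U) {z : ℂ} (hz : z ∈ U) :
    ‖FF E b z‖ = ‖(FF E a z - FF E a b) / (1 - (starRingEnd ℂ) (FF E a b) * FF E a z)‖ := by
  have := S.mob_dslope ha hb hz
  set k := (fun z => (FF E a z - FF E a b) / (1 - (starRingEnd ℂ) (FF E a b) * FF E a z)) with hk
  have h2 : k z = (z - b) * dslope k b z := by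
    have := sub_smul_dslope k b z
    rw [show k b = 0 by simp [hk], sub_zero] at this
    rw [← this, smul_eq_mul]
  change _ = ‖k z‖
  rw [h2, FF, norm_mul, norm_mul, this]

theorem deriv_eq {U : Set ℂ} {E : ℂ → ℂ → ℂ} (S : GreenSys U E) {a b : ℂ} (ha : a ∈ U) (hb : b ∈ U) :
    ‖E b b‖ = ‖deriv (FF E a) b‖ / (1 - ‖FF E a b‖ ^ 2) := by
  have := S.mob_dslope ha hb hb
  rw [dslope_same] at this
  have hd := ((S.diffF ha).differentiableAt (S.op.mem_nhds hb)).hasDerivAt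
  have hden := mob_den_ne (S.F_lt ha hb) (S.F_lt ha hb)
  have h3 : 1 - (starRingEnd ℂ) (FF E a b) * FF E a b = ((1 - ‖FF E a b‖ ^ 2 : ℝ) : ℂ) := by
    rw [mul_comm, Complex.mul_conj, Complex.normSq_eq_norm_sq]; push_cast; ring
  have hpos : 0 < 1 - ‖FF E a b‖ ^ 2 := by nlinarith [S.F_lt ha hb, norm_nonneg (FF E a b)]
  have h2 := (hd.sub_const (FF E a b)).div ((hd.const_mul ((starRingEnd ℂ) (FF E a b))).const_sub 1)
    hden
  have h4 := h2.deriv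
  simp only [sub_self, zero_mul, sub_zero] at h4
  rw [← this]
  have h5 : ∀ d : ℂ, ‖d * (1 - (starRingEnd ℂ) (FF E a b) * FF E a b) /
    (1 - (starRingEnd ℂ) (FF E a b) * FF E a b) ^ 2‖ = ‖d‖ / (1 - ‖FF E a b‖ ^ 2) := by
    intro d
    rw [h3, norm_div, norm_mul, norm_pow, Complex.norm_of_nonneg hpos.le]
    field_simp
  rw [← h5, ← h4]
  rfl

theorem deriv_ne {U : Set ℂ} {E : ℂ → ℂ → ℂ} (S : GreenSys U E) {a b : ℂ} (ha : a ∈ U) (hb : b ∈ U) : deriv (FF E a) b ≠ 0 := by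
  intro h
  have := S.deriv_eq ha hb
  rw [h, norm_zero, zero_div, norm_eq_zero] at this
  exact S.ne b hb b hb this

theorem injOn {U : Set ℂ} {E : ℂ → ℂ → ℂ} (S : GreenSys U E) {a : ℂ} (ha : a ∈ U) : Set.InjOn (FF E a) U := by
  intro z hz b hb h
  by_contra hne
  have := S.mob_eq ha hb hz
  rw [h, sub_self, zero_div, norm_zero, norm_eq_zero] at this
  exact S.F_ne hb hz hne this

theorem exists_inv {U : Set ℂ} {E : ℂ → ℂ → ℂ} (S : GreenSys U E) {a : ℂ} (ha : a ∈ U) : ∃ g : ℂ → ℂ,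
    (∀ w ∈ Metric.ball (0:ℂ) 1, g w ∈ U ∧ FF E a (g w) = w) ∧ g 0 = a ∧
    DifferentiableOn ℂ g (Metric.ball 0 1) := by
  have hstrict : ∀ z ∈ U, HasStrictDerivAt (FF E a) (deriv (FF E a) z) z := fun z hz =>
    ((S.diffF ha).analyticAt (S.op.mem_nhds hz)).hasStrictDerivAt
  have hopen : IsOpen (FF E a '' U) := by
    rw [isOpen_iff_mem_nhds]
    rintro _ ⟨z, hz, rfl⟩
    have := (hstrict z hz).map_nhds_eq (S.deriv_ne ha hz)
    rw [← this]
    exact Filter.image_mem_map (S.op.mem_nhds hz)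
  have hsurj : Metric.ball (0:ℂ) 1 ⊆ FF E a '' U := by
    refine (convex_ball (0:ℂ) 1).isPreconnected.subset_of_closure_inter_subset hopen
      ⟨0, by simp, a, ha, S.F_self a⟩ ?_
    rintro w ⟨hw, hw1⟩
    rw [mem_ball_zero_iff] at hw1
    obtain ⟨r, hr, hr1⟩ := exists_between hw1
    obtain ⟨K, h1, h2, h3⟩ := S.bdry a ha (1 - r) (by linarith)
    have hcl : IsClosed (FF E a '' K) :=
      (h2.image_of_continuousOn ((S.diffF ha).continuousOn.mono h1)).isClosed
    have hw2 : w ∈ closure (FF E a '' U ∩ Metric.ball 0 r) := by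
      rw [Set.inter_comm]
      exact (Metric.isOpen_ball.inter_closure) ⟨by simpa using hr, hw⟩
    have hsub : FF E a '' U ∩ Metric.ball 0 r ⊆ FF E a '' K := by
      rintro _ ⟨⟨z, hz, rfl⟩, hzr⟩
      rw [mem_ball_zero_iff] at hzr
      by_contra hcon
      have := (h3 z hz fun hzK => hcon ⟨z, hzK, rfl⟩).1
      change _ ≤ ‖FF E a z‖ at this
      linarith
    exact Set.image_mono h1 (closure_minimal hsub hcl hw2)
  refine ⟨Function.invFunOn (FF E a) U, fun w hw => ⟨Function.invFunOn_mem (hsurj hw),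
    Function.invFunOn_eq (hsurj hw)⟩, ?_, ?_⟩
  · have h0 : (0:ℂ) ∈ FF E a '' U := ⟨a, ha, S.F_self a⟩
    exact S.injOn ha (Function.invFunOn_mem h0) ha
      ((Function.invFunOn_eq h0).trans (S.F_self a).symm)
  · intro w hw
    obtain ⟨z, hz, rfl⟩ := hsurj hw
    apply DifferentiableAt.differentiableWithinAt
    have hs := hstrict z hz
    have hne := S.deriv_ne ha hz
    have hl := hs.to_localInverse hne
    refine hl.hasDerivAt.differentiableAt.congr_of_eventuallyEq ?_
    have e1 := hs.eventually_right_inverse hne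
    have hc : ContinuousAt (hs.localInverse (FF E a) _ z hne) (FF E a z) :=
      hl.hasDerivAt.continuousAt
    have hv : hs.localInverse (FF E a) _ z hne (FF E a z) = z :=
      HasStrictFDerivAt.localInverse_apply_image _
    have e2 := hc.eventually (S.op.mem_nhds (by rw [hv]; exact hz))
    filter_upwards [e1, e2, Metric.isOpen_ball.mem_nhds hw] with y h1 h2 h3
    exact S.injOn ha (Function.invFunOn_mem (hsurj h3)) h2
      ((Function.invFunOn_eq (hsurj h3)).trans h1.symm)

end GreenSys


theorem fderiv_nonpos_of_le {V : Type*} [NormedAddCommGroup V] [NormedSpace ℝ V] {f : V → ℝ}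
    {x v : V} (hf : DifferentiableAt ℝ f x)
    (h : ∀ t : ℝ, 0 ≤ t → t ≤ 1 / 2 → f (x + t • v) ≤ f x) : fderiv ℝ f x v ≤ 0 := by
  have h1 : HasDerivAt (fun t : ℝ => f (x + t • v)) (fderiv ℝ f x v) 0 := by
    have hl : HasDerivAt (fun t : ℝ => x + t • v) v 0 := by
      simpa using ((hasDerivAt_id (0:ℝ)).smul_const v).const_add x
    have hf' : HasFDerivAt f (fderiv ℝ f x) (x + (0:ℝ) • v) := by simpa using hf.hasFDerivAt
    exact hf'.comp_hasDerivAt (0:ℝ) hl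
  have h2 := h1.tendsto_slope_zero_right
  refine le_of_tendsto h2 ?_
  filter_upwards [Ioo_mem_nhdsGT (show (0:ℝ) < 1 / 2 by norm_num)] with t ht
  have := h t ht.1.le ht.2.le
  simp only [zero_add, zero_smul, add_zero, smul_eq_mul]
  exact mul_nonpos_of_nonneg_of_nonpos (inv_nonneg.2 ht.1.le) (by linarith)

namespace GreenSys

theorem hasDeriv_self {U : Set ℂ} {E : ℂ → ℂ → ℂ} (S : GreenSys U E) {a : ℂ} (ha : a ∈ U) : HasDerivAt (FF E a) (E a a) a := by
  have := ((hasDerivAt_id a).sub_const a).mul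
    ((S.diff a ha).differentiableAt (S.op.mem_nhds ha)).hasDerivAt
  simpa using! this

theorem seg_mem {U : Set ℂ} {E : ℂ → ℂ → ℂ} (S : GreenSys U E) {x P : ℂ} (hx : x ∈ U) (hP : P ∈ U) {t : ℝ} (h0 : 0 ≤ t) (h1 : t ≤ 1) :
    x + t • (P - x) ∈ U := S.conv.add_smul_sub_mem hx hP ⟨h0, h1⟩

theorem phi_le {U : Set ℂ} {E : ℂ → ℂ → ℂ} (S : GreenSys U E) {x P : ℂ} (hx : x ∈ U) (hP : P ∈ U) (h : ‖E P P‖ ≤ ‖E x x‖) {t : ℝ}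
    (h0 : 0 ≤ t) (h1 : t ≤ 1) :
    ‖E (x + t • (P - x)) (x + t • (P - x))‖ ≤ ‖E x x‖ := by
  obtain ⟨g, hg, hg0, hgd⟩ := S.exists_inv hP
  have hEx := S.ne x hx x hx
  have hEP := S.ne P hP P hP
  have hnx := norm_pos_iff.2 hEx
  have hnP := norm_pos_iff.2 hEP
  have hg' : HasDerivAt g (E P P)⁻¹ 0 := by
    have hd := (hgd.differentiableAt (Metric.isOpen_ball.mem_nhds (by simp))).hasDerivAt
      (x := (0:ℂ))
    have hF : HasDerivAt (FF E P) (E P P) (g 0) := by rw [hg0]; exact S.hasDeriv_self hP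
    have hc := hF.comp (0:ℂ) hd
    have hid : HasDerivAt (FF E P ∘ g) 1 0 := by
      refine (hasDerivAt_id (0:ℂ)).congr_of_eventuallyEq ?_
      filter_upwards [Metric.isOpen_ball.mem_nhds (show (0:ℂ) ∈ Metric.ball (0:ℂ) 1 by simp)]
        with w hw using (hg w hw).2
    have := hc.unique hid
    rw [← eq_inv_of_mul_eq_one_right this]
    exact hd
  set c : ℂ := (‖E x x‖ : ℂ) / E x x * (E P P / (‖E P P‖ : ℂ)) with hc
  have hcn : ‖c‖ = 1 := by
    rw [hc, norm_mul, norm_div, norm_div, Complex.norm_of_nonneg (norm_nonneg _),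
      Complex.norm_of_nonneg (norm_nonneg _)]
    field_simp
  have hmem : ∀ z ∈ U, c * FF E x z ∈ Metric.ball (0:ℂ) 1 := fun z hz => by
    rw [mem_ball_zero_iff, norm_mul, hcn, one_mul]; exact S.F_lt hx hz
  set q : ℂ → ℂ := fun z => z + t • (g (c * FF E x z) - z) with hq
  have hqU : ∀ z ∈ U, q z ∈ U := fun z hz => S.seg_mem hz (hg _ (hmem z hz)).1 h0 h1
  have hqd : DifferentiableOn ℂ q U := by
    have h2 : DifferentiableOn ℂ (fun z => g (c * FF E x z)) U :=
      hgd.comp ((S.diffF hx).const_mul c) hmem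
    have : DifferentiableOn ℂ (fun z => z + (t:ℂ) * (g (c * FF E x z) - z)) U :=
      differentiableOn_id.add ((h2.sub differentiableOn_id).const_mul _)
    simpa only [hq, Complex.real_smul] using this
  have hqx : q x = x + t • (P - x) := by simp [hq, S.F_self, hg0]
  rw [← hqx]
  set ρ : ℝ := ‖E x x‖ / ‖E P P‖ with hρ
  have hρ1 : 1 ≤ ρ := (one_le_div hnP).2 h
  have hqder : HasDerivAt q ((1 + t * (ρ - 1) : ℝ) : ℂ) x := by
    have e1 : HasDerivAt (fun z => c * FF E x z) (c * E x x) x := (S.hasDeriv_self hx).const_mul c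
    have hg'' : HasDerivAt g (E P P)⁻¹ (c * FF E x x) := by simpa [S.F_self] using hg'
    have e2 := hg''.comp x e1
    have e3 : (E P P)⁻¹ * (c * E x x) = (ρ : ℂ) := by
      rw [hc, hρ]; push_cast
      have : (‖E P P‖ : ℂ) ≠ 0 := by exact_mod_cast hnP.ne'
      field_simp
    rw [e3] at e2
    have e4 := (hasDerivAt_id x).add ((e2.sub (hasDerivAt_id x)).const_mul (t:ℂ))
    push_cast
    convert! e4 using 1
  have hk : DifferentiableOn ℂ (FF E (q x) ∘ q) U := (S.diffF (hqU x hx)).comp hqd hqU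
  have hs := S.schwarz_deriv hx hk (fun z hz => S.F_le (hqU x hx) _ (hqU z hz))
    (by simp [S.F_self])
  rw [((S.hasDeriv_self (hqU x hx)).comp x hqder).deriv, norm_mul, Complex.norm_real] at hs
  refine le_trans ?_ hs
  have h3 : 0 ≤ t * (ρ - 1) := mul_nonneg h0 (by linarith)
  have : 1 ≤ ‖1 + t * (ρ - 1)‖ := by
    rw [Real.norm_of_nonneg (by linarith)]; linarith
  exact le_mul_of_one_le_right (norm_nonneg _) this

theorem gam_le {U : Set ℂ} {E : ℂ → ℂ → ℂ} (S : GreenSys U E) {a b P : ℂ} (ha : a ∈ U) (hb : b ∈ U) (hP : P ∈ U) : ∃ δ > (0:ℝ),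
    ∀ l : ℂ, ‖l‖ ≤ δ → ∀ t : ℝ, 0 ≤ t → t ≤ 1 →
    a + t • (P - a + l * (a - b)) ∈ U ∧
    ‖FF E (b + t • (P - b)) (a + t • (P - a + l * (a - b)))‖ ≤ ‖FF E b a‖ := by
  obtain ⟨r, hr, hrU⟩ := Metric.isOpen_iff.1 S.op P hP
  obtain ⟨C, hC⟩ := S.bdd.exists_norm_le
  have hC0 : 0 ≤ C := (norm_nonneg _).trans (hC a ha)
  refine ⟨r / (2 * C + 1), by positivity, fun l hl t h0 h1 => ?_⟩
  have hPl : ∀ z ∈ U, P + l * (z - b) ∈ U := fun z hz => by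
    apply hrU
    rw [Metric.mem_ball, dist_self_add_left, norm_mul]
    have : ‖z - b‖ ≤ 2 * C := (norm_sub_le _ _).trans (by linarith [hC z hz, hC b hb])
    calc ‖l‖ * ‖z - b‖ ≤ r / (2 * C + 1) * (2 * C) := by gcongr
      _ < r := by rw [div_mul_eq_mul_div, div_lt_iff₀ (by positivity)]; nlinarith
  set q : ℂ → ℂ := fun z => z + t • (P + l * (z - b) - z) with hq
  have hqU : ∀ z ∈ U, q z ∈ U := fun z hz => S.seg_mem hz (hPl z hz) h0 h1
  have hqd : DifferentiableOn ℂ q U := by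
    have : DifferentiableOn ℂ (fun z => z + (t:ℂ) * (P + l * (z - b) - z)) U := by fun_prop
    simpa only [hq, Complex.real_smul] using this
  have hqb : q b = b + t • (P - b) := by simp [hq]
  have hqa : q a = a + t • (P - a + l * (a - b)) := by
    simp only [hq, Complex.real_smul]; ring
  rw [← hqb, ← hqa]
  refine ⟨hqU a ha, ?_⟩
  have hk : DifferentiableOn ℂ (FF E (q b) ∘ q) U := (S.diffF (hqU b hb)).comp hqd hqU
  exact S.schwarz_F hb hk (fun z hz => S.F_le (hqU b hb) _ (hqU z hz)) (by simp [S.F_self]) ha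

theorem gam_diff {U : Set ℂ} {E : ℂ → ℂ → ℂ} (S : GreenSys U E) {a b : ℂ} (ha : a ∈ U) (hb : b ∈ U) (hab : a ≠ b) :
    DifferentiableAt ℝ (fun p : ℂ × ℂ => Real.log ‖FF E p.2 p.1‖) (a, b) := by
  have hmem : U ×ˢ U ∈ nhds (a, b) := prod_mem_nhds (S.op.mem_nhds ha) (S.op.mem_nhds hb)
  have hd : ∀ z ∈ U, DifferentiableAt ℝ (FF E a) z := fun z hz =>
    ((S.diffF ha).differentiableAt (S.op.mem_nhds hz)).restrictScalars ℝ
  have h1 : DifferentiableAt ℝ (fun p : ℂ × ℂ => FF E a p.1) (a, b) :=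
    DifferentiableAt.fun_comp' (g := FF E a) (a, b) (hd a ha) differentiableAt_fst
  have h2 : DifferentiableAt ℝ (fun p : ℂ × ℂ => FF E a p.2) (a, b) :=
    DifferentiableAt.fun_comp' (g := FF E a) (a, b) (hd b hb) differentiableAt_snd
  have h2c : DifferentiableAt ℝ (fun p : ℂ × ℂ => (starRingEnd ℂ) (FF E a p.2)) (a, b) :=
    DifferentiableAt.comp (a, b) (Complex.conjCLE.differentiableAt) h2
  have hden := mob_den_ne (S.F_lt ha hb) (S.F_lt ha ha)
  have h3 : DifferentiableAt ℝ (fun p : ℂ × ℂ => (FF E a p.1 - FF E a p.2) /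
      (1 - (starRingEnd ℂ) (FF E a p.2) * FF E a p.1)) (a, b) := by
    have hD : DifferentiableAt ℝ (fun p : ℂ × ℂ => 1 - (starRingEnd ℂ) (FF E a p.2) * FF E a p.1)
        (a, b) := (h2c.mul h1).const_sub 1
    simp only [div_eq_mul_inv]
    exact (h1.sub h2).mul (hD.inv hden)
  have hne : (FF E a a - FF E a b) / (1 - (starRingEnd ℂ) (FF E a b) * FF E a a) ≠ 0 :=
    div_ne_zero (sub_ne_zero.2 fun h => hab (S.injOn ha ha hb h)) hden
  have h4 := (h3.norm ℝ hne).log (norm_ne_zero_iff.2 hne)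
  refine h4.congr_of_eventuallyEq ?_
  filter_upwards [hmem] with p hp
  rw [S.mob_eq ha hp.2 hp.1]

theorem phi_diff {U : Set ℂ} {E : ℂ → ℂ → ℂ} (S : GreenSys U E) {a : ℂ} (ha : a ∈ U) :
    DifferentiableAt ℝ (fun x : ℂ => Real.log ‖E x x‖) a := by
  have hd : DifferentiableAt ℝ (FF E a) a := (S.hasDeriv_self ha).differentiableAt.restrictScalars ℝ
  have hd' : DifferentiableAt ℝ (deriv (FF E a)) a :=
    (((S.diffF ha).deriv S.op).differentiableAt (S.op.mem_nhds ha)).restrictScalars ℝ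
  have hne := S.deriv_ne ha ha
  have hpos : (1 - ‖FF E a a‖ ^ 2) ≠ 0 := by simp [S.F_self]
  have h0 : DifferentiableAt ℝ (fun x => ‖deriv (FF E a) x‖ / (1 - ‖FF E a x‖ ^ 2)) a := by
    have hD : DifferentiableAt ℝ (fun x => 1 - ‖FF E a x‖ ^ 2) a := (hd.norm_sq ℝ).const_sub 1
    simp only [div_eq_mul_inv]
    exact (hd'.norm ℝ hne).mul (hD.inv hpos)
  have h1 := h0.log (div_ne_zero (norm_ne_zero_iff.2 hne) hpos)
  refine h1.congr_of_eventuallyEq ?_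
  filter_upwards [S.op.mem_nhds ha] with x hx
  rw [S.deriv_eq ha hx]

theorem phi_nonpos {U : Set ℂ} {E : ℂ → ℂ → ℂ} (S : GreenSys U E) {a P : ℂ} (ha : a ∈ U) (hP : P ∈ U) (h : ‖E P P‖ ≤ ‖E a a‖) :
    fderiv ℝ (fun x : ℂ => Real.log ‖E x x‖) a (P - a) ≤ 0 := by
  refine fderiv_nonpos_of_le (S.phi_diff ha) fun t h0 h1 => ?_
  have hm := S.seg_mem ha hP h0 (h1.trans (by norm_num))
  exact Real.log_le_log (norm_pos_iff.2 (S.ne _ hm _ hm)) (S.phi_le ha hP h h0 (h1.trans (by norm_num)))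

theorem gam_neg {U : Set ℂ} {E : ℂ → ℂ → ℂ} (S : GreenSys U E) {a b P : ℂ} (ha : a ∈ U) (hb : b ∈ U) (hab : a ≠ b) (hP : P ∈ U) :
    fderiv ℝ (fun p : ℂ × ℂ => Real.log ‖FF E p.2 p.1‖) (a, b) (P - a, P - b) < 0 := by
  set Γ := fun p : ℂ × ℂ => Real.log ‖FF E p.2 p.1‖ with hΓ
  have hdiff : DifferentiableAt ℝ Γ (a, b) := S.gam_diff ha hb hab
  obtain ⟨δ, hδ, hle⟩ := S.gam_le ha hb hP
  have hF0 := S.F_ne hb ha hab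
  have h1 : ∀ l : ℂ, ‖l‖ ≤ δ → ‖l‖ ≤ 1 / 2 →
      fderiv ℝ Γ (a, b) (P - a + l * (a - b), P - b) ≤ 0 := by
    intro l hl hl2
    refine fderiv_nonpos_of_le hdiff fun t h0 h1 => ?_
    have h1' : t ≤ 1 := h1.trans (by norm_num)
    obtain ⟨hm, hle'⟩ := hle l hl t h0 h1'
    simp only [hΓ, Prod.smul_mk, Prod.mk_add_mk]
    have hz : FF E (b + t • (P - b)) (a + t • (P - a + l * (a - b))) ≠ 0 := by
      refine S.F_ne (S.seg_mem hb hP h0 h1') hm fun h => ?_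
      have h2 : (a - b) * ((1 - t : ℝ) + t * l) = 0 := by
        rw [← sub_eq_zero] at h
        rw [← h]; simp only [Complex.real_smul]; push_cast; ring
      rcases mul_eq_zero.1 h2 with h3 | h3
      · exact hab (sub_eq_zero.1 h3)
      · have h4 : ‖((1 - t : ℝ) : ℂ)‖ = ‖(t : ℂ) * l‖ := by
          rw [eq_neg_of_add_eq_zero_left h3, norm_neg]
        rw [norm_mul, Complex.norm_of_nonneg (by linarith), Complex.norm_of_nonneg h0] at h4
        nlinarith [norm_nonneg l]
    exact Real.log_le_log (norm_pos_iff.2 hz) hle'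
  have hF' := S.deriv_ne hb ha
  set v : ℂ := FF E b a / deriv (FF E b) a with hv
  have hv0 : v ≠ 0 := div_ne_zero hF0 hF'
  have h2 : fderiv ℝ Γ (a, b) (v, 0) = 1 := by
    have hl : HasDerivAt (fun t : ℝ => (a + t • v, b)) (v, 0) 0 := by
      refine HasDerivAt.prodMk ?_ (hasDerivAt_const _ _)
      simpa using ((hasDerivAt_id (0:ℝ)).smul_const v).const_add a
    have hf' : HasFDerivAt Γ (fderiv ℝ Γ (a, b)) (a + (0:ℝ) • v, b) := by
      simpa using hdiff.hasFDerivAt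
    have e1 := hf'.comp_hasDerivAt (0:ℝ) hl
    have e2 : HasDerivAt (fun t : ℝ => FF E b (a + t • v)) (FF E b a) 0 := by
      have hd := ((S.diffF hb).differentiableAt (S.op.mem_nhds ha)).hasDerivAt
      have hd' : HasDerivAt (FF E b) (deriv (FF E b) a) (a + (0:ℝ) • v) := by simpa using hd
      have hl' : HasDerivAt (fun t : ℝ => a + t • v) v 0 := by
        simpa using ((hasDerivAt_id (0:ℝ)).smul_const v).const_add a
      have := hd'.comp_of_eq (0:ℝ) hl' rfl
      rw [hv, mul_div_cancel₀ _ hF'] at this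
      exact this
    have e3 := e2.norm_sq
    have e4 := (e3.log (by simpa using hF0)).div_const 2
    have e5 : (Γ ∘ fun t : ℝ => (a + t • v, b)) =
        fun t : ℝ => Real.log (‖FF E b (a + t • v)‖ ^ 2) / 2 := by
      funext t
      simp [hΓ, Real.log_pow]
    rw [e5] at e1
    have e6 := e1.unique e4
    rw [e6]
    have := norm_ne_zero_iff.2 hF0
    simp only [zero_smul, add_zero, real_inner_self_eq_norm_sq]
    field_simp
  have hab' : a - b ≠ 0 := sub_ne_zero.2 hab
  set M : ℝ := ‖v / (a - b)‖ with hM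
  have hM0 : 0 < M := norm_pos_iff.2 (div_ne_zero hv0 hab')
  set s : ℝ := min δ (1 / 2) / M with hs
  have hs0 : 0 < s := by positivity
  have hsn : ‖(s : ℂ) * (v / (a - b))‖ = min δ (1 / 2) := by
    rw [norm_mul, Complex.norm_of_nonneg hs0.le, ← hM, hs]; field_simp
  have h3 := h1 ((s : ℂ) * (v / (a - b))) (hsn.le.trans (min_le_left _ _))
    (hsn.le.trans (min_le_right _ _))
  have h4 : (P - a + (s : ℂ) * (v / (a - b)) * (a - b), P - b) = (P - a, P - b) + s • (v, (0:ℂ)) := by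
    ext1
    · simp; field_simp
    · simp
  rw [h4, map_add, map_smul, h2, smul_eq_mul, mul_one] at h3
  linarith

end GreenSys


/-- A harmonic function on a convex domain is the real part of a holomorphic function. -/
theorem harmonic_re {U : Set ℂ} (hU : IsOpen U) (hc : Convex ℝ U) {f : ℂ → ℝ}
    (hf : InnerProductSpace.HarmonicOnNhd f U) :
    ∃ F : ℂ → ℂ, DifferentiableOn ℂ F U ∧ ∀ z ∈ U, (F z).re = f z := by
  rcases U.eq_empty_or_nonempty with rfl | ⟨z0, hz0⟩
  · exact ⟨0, by simp, by simp⟩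
  set g : ℂ → ℂ := fun z ↦ fderiv ℝ f z 1 - Complex.I * fderiv ℝ f z Complex.I with hgdef
  have hg : DifferentiableOn ℂ g U :=
    fun x hx ↦ (HarmonicAt.differentiableAt_complex_partial (hf x hx)).differentiableWithinAt
  obtain ⟨F0, hF0⟩ := hc.exists_forall_hasDerivWithinAt hg
  set F : ℂ → ℂ := fun z => F0 z + (f z0 - F0 z0) with hF
  have hFd : ∀ z ∈ U, HasDerivAt F (g z) z := fun z hz =>
    ((hF0 z hz).hasDerivAt (hU.mem_nhds hz)).add_const _
  have h₁F : DifferentiableOn ℂ F U :=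
    fun x hx ↦ (hFd x hx).differentiableAt.differentiableWithinAt
  have h₂F : DifferentiableOn ℝ F U := h₁F.restrictScalars (𝕜 := ℝ) (𝕜' := ℂ)
  refine ⟨F, h₁F, fun x hx => ?_⟩
  have key : Set.EqOn (Complex.reCLM ∘ F) f U := by
    apply hc.eqOn_of_fderivWithin_eq (𝕜 := ℝ) (x := z0)
    · exact Complex.reCLM.differentiable.comp_differentiableOn h₂F
    · exact fun y hy ↦ (ContDiffAt.differentiableAt (hf y hy).1 two_ne_zero).differentiableWithinAt
    · exact hU.uniqueDiffOn
    · intro y hy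
      have h₄F := (hFd y hy).differentiableAt
      have h₅F := h₄F.restrictScalars (𝕜 := ℝ) (𝕜' := ℂ)
      rw [fderivWithin_eq_fderiv (hU.uniqueDiffWithinAt hy)
        (Complex.reCLM.differentiableAt.comp y h₅F), fderivWithin_eq_fderiv
        (hU.uniqueDiffWithinAt hy) ((hf y hy).1.differentiableAt two_ne_zero), fderiv_comp y
        (by fun_prop) h₅F, ContinuousLinearMap.fderiv, h₄F.fderiv_restrictScalars (𝕜 := ℝ)]
      ext a
      nth_rw 2 [(by simp : a = a.re • (1 : ℂ) + a.im • (Complex.I : ℂ))]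
      rw [map_add, map_smul, map_smul]
      simp [HasDerivAt.deriv (hFd y hy), g]
    · exact hz0
    · simp [hF]
  exact key hx

/-- The identification of the complex plane with the Euclidean plane. -/
noncomputable def LL : ℂ ≃ₗᵢ[ℝ] E2 := Complex.orthonormalBasisOneI.repr

theorem LL_one : LL 1 = EuclideanSpace.single 0 1 := by
  have := Complex.orthonormalBasisOneI.repr_self 0
  simpa [LL] using this

theorem LL_I : LL Complex.I = EuclideanSpace.single 1 1 := by
  have := Complex.orthonormalBasisOneI.repr_self 1
  simpa [LL] using this

theorem fderiv_LL (f : E2 → ℝ) (z v : ℂ) :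
    fderiv ℝ (fun z => f (LL z)) z v = fderiv ℝ f (LL z) (LL v) := by
  have := LL.toContinuousLinearEquiv.comp_right_fderiv (f := f) (x := z)
  have h2 := congrArg (fun A => A v) this
  simpa [Function.comp_def] using h2

theorem lap_LL (f : E2 → ℝ) (z : ℂ) : lap f (LL z) =
    fderiv ℝ (fun w => fderiv ℝ (fun w => f (LL w)) w 1) z 1 +
    fderiv ℝ (fun w => fderiv ℝ (fun w => f (LL w)) w Complex.I) z Complex.I := by
  simp only [fderiv_LL, lap, Fin.sum_univ_two, ← LL_one, ← LL_I]
  rw [fderiv_LL (fun y => fderiv ℝ f y (LL 1)), fderiv_LL (fun y => fderiv ℝ f y (LL Complex.I))]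

theorem harm_LL {Ω : Set E2} (hΩo : IsOpen Ω) {f : E2 → ℝ} (hf : ContDiffOn ℝ 2 f Ω)
    (hl : ∀ y ∈ Ω, lap f y = 0) :
    InnerProductSpace.HarmonicOnNhd (fun z => f (LL z)) (LL ⁻¹' Ω) := by
  have hU : IsOpen (LL ⁻¹' Ω) := hΩo.preimage LL.continuous
  have hcd : ∀ z ∈ LL ⁻¹' Ω, ContDiffAt ℝ 2 (fun z => f (LL z)) z := fun z hz =>
    (hf.contDiffAt (hΩo.mem_nhds hz)).comp z LL.contDiff.contDiffAt
  intro z hz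
  refine ⟨hcd z hz, ?_⟩
  filter_upwards [hU.mem_nhds hz] with w hw
  have h0 := hl _ hw
  rw [lap_LL] at h0
  have hd : DifferentiableAt ℝ (fderiv ℝ (fun z => f (LL z))) w :=
    ((hcd w hw).fderiv_right (m := 1) (by norm_num)).differentiableAt (by norm_num)
  rw [fderiv_clm_apply hd (by fun_prop), fderiv_clm_apply hd (by fun_prop)] at h0
  rw [InnerProductSpace.laplacian_eq_iteratedFDeriv_complexPlane]
  simp only [iteratedFDeriv_two_apply]
  simpa using h0

theorem exists_E {Ω : Set E2} (hΩo : IsOpen Ω)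
    (hΩb : Bornology.IsBounded Ω) (hconv : Convex ℝ Ω)
    {H : E2 → E2 → ℝ}
    (hH : ∀ x' ∈ Ω, ContDiffOn ℝ 2 (fun y => H y x') Ω ∧
      (∀ y ∈ Ω, lap (fun y => H y x') y = 0) ∧
      ContinuousOn (fun y => H y x') (closure Ω) ∧
      (∀ y ∈ frontier Ω, H y x' = (1 / (2 * π)) * Real.log (1 / ‖y - x'‖))) :
    ∃ E : ℂ → ℂ → ℂ, GreenSys (LL ⁻¹' Ω) E ∧
      ∀ b ∈ LL ⁻¹' Ω, ∀ z ∈ LL ⁻¹' Ω, ‖E b z‖ = Real.exp (2 * π * H (LL z) (LL b)) := by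
  set U := LL ⁻¹' Ω with hUdef
  have hU : IsOpen U := hΩo.preimage LL.continuous
  have hUc : Convex ℝ U := hconv.linear_preimage LL.toLinearEquiv.toLinearMap
  have hUb : Bornology.IsBounded U := by
    have : U = LL.symm '' Ω := by
      rw [hUdef]; exact (LL.symm.toEquiv.image_eq_preimage_symm Ω).symm
    rw [this]
    exact LL.symm.lipschitz.isBounded_image hΩb
  have hcl : closure U = LL ⁻¹' closure Ω := (LL.toHomeomorph.preimage_closure Ω).symm
  have hfr : frontier U = LL ⁻¹' frontier Ω := (LL.toHomeomorph.preimage_frontier Ω).symm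
  have hex : ∀ b, ∃ e : ℂ → ℂ, b ∈ U → DifferentiableOn ℂ e U ∧
      ∀ z ∈ U, ‖e z‖ = Real.exp (2 * π * H (LL z) (LL b)) := by
    intro b
    by_cases hb : b ∈ U
    · obtain ⟨F, hF, hFre⟩ := harmonic_re hU hUc (harm_LL hΩo (hH _ hb).1 (hH _ hb).2.1)
      refine ⟨fun z => Complex.exp (((2 * π : ℝ) : ℂ) * F z), fun _ => ⟨?_, fun z hz => ?_⟩⟩
      · exact (hF.const_mul _).cexp
      · rw [Complex.norm_exp, Complex.re_ofReal_mul, hFre z hz]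
    · exact ⟨0, fun h => absurd h hb⟩
  choose E hE using hex
  refine ⟨E, ⟨hU, hUb, hUc, fun b hb => (hE b hb).1, fun b hb z hz => ?_, fun b hb ε hε => ?_⟩,
    fun b hb => (hE b hb).2⟩
  · rw [← norm_pos_iff, (hE b hb).2 z hz]; positivity
  · set v : ℂ → ℝ := fun z => |‖z - b‖ * Real.exp (2 * π * H (LL z) (LL b)) - 1| with hv
    have hHc : ContinuousOn (fun z => H (LL z) (LL b)) (closure U) := by
      rw [hcl]
      exact (hH _ hb).2.2.1.comp LL.continuous.continuousOn fun z hz => hz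
    have hvc : ContinuousOn v (closure U) := by
      have : ContinuousOn (fun z => Real.exp (2 * π * H (LL z) (LL b))) (closure U) :=
        (hHc.const_mul _).rexp
      have h2 : ContinuousOn (fun z : ℂ => ‖z - b‖) (closure U) := by fun_prop
      exact ((h2.mul this).sub continuousOn_const).abs
    have hcpt : IsCompact (closure U) := hUb.isCompact_closure
    refine ⟨closure U ∩ v ⁻¹' Set.Ici ε, ?_, ?_, ?_⟩
    · rintro z ⟨hz, hzv⟩
      by_contra hzU
      have hzf : z ∈ frontier U := by rw [hU.frontier_eq]; exact ⟨hz, hzU⟩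
      have hzb : z ≠ b := fun h => hzU (h ▸ hb)
      have hpos : 0 < ‖z - b‖ := norm_pos_iff.2 (sub_ne_zero.2 hzb)
      have := (hH _ hb).2.2.2 (LL z) (by rw [hfr] at hzf; exact hzf)
      rw [← map_sub, LL.norm_map] at this
      have hpi := Real.pi_pos
      have h3 : 2 * π * H (LL z) (LL b) = Real.log (1 / ‖z - b‖) := by
        rw [this]; field_simp
      have h4 : v z = 0 := by
        simp only [hv]
        rw [h3, Real.exp_log (by positivity)]
        field_simp
        simp
      simp only [Set.mem_preimage, h4, Set.mem_Ici] at hzv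
      linarith
    · exact hcpt.of_isClosed_subset (hvc.preimage_isClosed_of_isClosed isClosed_closure isClosed_Ici)
        Set.inter_subset_left
    · intro z hz hzK
      have h5 : v z < ε := by
        by_contra h
        exact hzK ⟨subset_closure hz, not_lt.1 h⟩
      rw [norm_mul, (hE b hb).2 z hz]
      have h6 := abs_lt.1 h5
      constructor <;> linarith [h6.1, h6.2]

/-- Grossi–Takahashi: on a bounded convex planar domain the
Kirchhoff–Routh function with `k ≥ 2` vortices of positive strengths has no critical point. -/
theorem stmt10 (Ω : Set E2) (hΩo : IsOpen Ω) (hΩne : Ω.Nonempty)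
    (hΩb : Bornology.IsBounded Ω) (hconv : Convex ℝ Ω)
    (H : E2 → E2 → ℝ)
    (hH : ∀ x' ∈ Ω, ContDiffOn ℝ 2 (fun y => H y x') Ω ∧
      (∀ y ∈ Ω, lap (fun y => H y x') y = 0) ∧
      ContinuousOn (fun y => H y x') (closure Ω) ∧
      (∀ y ∈ frontier Ω, H y x' = (1 / (2 * π)) * Real.log (1 / ‖y - x'‖)))
    (G : E2 → E2 → ℝ)
    (hG : ∀ x x' : E2, G x x' = (1 / (2 * π)) * Real.log (1 / ‖x - x'‖) - H x x')
    (k : ℕ) (hk : 2 ≤ k) (κ : Fin k → ℝ) (hκ : ∀ j, 0 < κ j)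
    (W : (Fin k → E2) → ℝ)
    (hW : ∀ x : Fin k → E2,
      W x = -(∑ i : Fin k, ∑ j ∈ Finset.univ.filter (fun j => j ≠ i),
              κ i * κ j * G (x i) (x j))
            + ∑ i : Fin k, (κ i) ^ 2 * H (x i) (x i)) :
    ¬ ∃ x : Fin k → E2, (∀ j, x j ∈ Ω) ∧ Function.Injective x ∧
        fderiv ℝ W x = 0 := by
  rintro ⟨x, hx, hinj, hW0⟩
  obtain ⟨E, S, hE⟩ := exists_E hΩo hΩb hconv hH
  have hpi := Real.pi_pos
  have hLs : ∀ y ∈ Ω, LL.symm y ∈ LL ⁻¹' Ω := fun y hy => by simpa using hy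
  have hGe : ∀ y ∈ Ω, ∀ y' ∈ Ω, y ≠ y' →
      G y y' = -(1 / (2 * π)) * Real.log ‖FF E (LL.symm y') (LL.symm y)‖ := by
    intro y hy y' hy' hne
    rw [hG, FF, norm_mul, hE _ (hLs y' hy') _ (hLs y hy), ← map_sub, LL.symm.norm_map]
    have : ‖y - y'‖ ≠ 0 := norm_ne_zero_iff.2 (sub_ne_zero.2 hne)
    rw [Real.log_mul this (Real.exp_ne_zero _), Real.log_exp, one_div ‖y - y'‖, Real.log_inv]
    simp only [LinearIsometryEquiv.apply_symm_apply]
    field_simp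
    ring
  have hHe : ∀ y ∈ Ω, H y y = 1 / (2 * π) * Real.log ‖E (LL.symm y) (LL.symm y)‖ := by
    intro y hy
    rw [hE _ (hLs y hy) _ (hLs y hy), Real.log_exp]
    simp only [LinearIsometryEquiv.apply_symm_apply]
    field_simp
  -- choose the target point
  haveI : Nonempty (Fin k) := ⟨⟨0, by omega⟩⟩
  obtain ⟨m, hm⟩ := Finite.exists_min (fun i => ‖E (LL.symm (x i)) (LL.symm (x i))‖)
  set P := x m with hP
  set d : Fin k → E2 := fun i => P - x i with hd
  -- derivatives of the pieces
  have hGd : ∀ i j, j ≠ i → ∃ A : (Fin k → E2) →L[ℝ] ℝ,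
      HasFDerivAt (fun y : Fin k → E2 => G (y i) (y j)) A x ∧ 0 < A d := by
    intro i j hij
    have hne : x i ≠ x j := fun h => hij (hinj h).symm
    have hne' : LL.symm (x i) ≠ LL.symm (x j) := fun h => hne (LL.symm.injective h)
    set B : (Fin k → E2) →L[ℝ] ℂ × ℂ :=
      (LL.symm.toContinuousLinearEquiv.toContinuousLinearMap.comp
        (ContinuousLinearMap.proj i)).prod
      (LL.symm.toContinuousLinearEquiv.toContinuousLinearMap.comp
        (ContinuousLinearMap.proj j)) with hB
    have hBa : ∀ y, B y = (LL.symm (y i), LL.symm (y j)) := fun y => rfl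
    have h1 := (S.gam_diff (hLs _ (hx i)) (hLs _ (hx j)) hne').hasFDerivAt
    have h2 := S.gam_neg (hLs _ (hx i)) (hLs _ (hx j)) hne' (hLs _ (hx m))
    rw [← hBa x] at h1
    have h3 := (h1.comp x B.hasFDerivAt).const_mul (-(1 / (2 * π)))
    refine ⟨_, h3.congr_of_eventuallyEq ?_, ?_⟩
    · have o1 : ∀ᶠ y : Fin k → E2 in nhds x, y i ∈ Ω :=
        (continuous_apply i).continuousAt.eventually (hΩo.mem_nhds (hx i))
      have o2 : ∀ᶠ y : Fin k → E2 in nhds x, y j ∈ Ω :=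
        (continuous_apply j).continuousAt.eventually (hΩo.mem_nhds (hx j))
      have o3 : ∀ᶠ y : Fin k → E2 in nhds x, y i ≠ y j :=
        (isOpen_ne_fun (continuous_apply i) (continuous_apply j)).mem_nhds hne
      filter_upwards [o1, o2, o3] with y h1 h2 h3
      rw [hGe _ h1 _ h2 h3]
      rfl
    · have hBd : B d = (LL.symm P - LL.symm (x i), LL.symm P - LL.symm (x j)) := by
        rw [hBa]; simp [hd]
      simp only [ContinuousLinearMap.smul_apply, ContinuousLinearMap.comp_apply, hBd, smul_eq_mul]
      have : 0 < 1 / (2 * π) := by positivity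
      rw [hBa]
      nlinarith
  have hHd : ∀ i, ∃ A : (Fin k → E2) →L[ℝ] ℝ,
      HasFDerivAt (fun y : Fin k → E2 => H (y i) (y i)) A x ∧ A d ≤ 0 := by
    intro i
    set B : (Fin k → E2) →L[ℝ] ℂ :=
      (LL.symm.toContinuousLinearEquiv.toContinuousLinearMap.comp
        (ContinuousLinearMap.proj i)) with hB
    have hBa : ∀ y, B y = LL.symm (y i) := fun y => rfl
    have h1 := (S.phi_diff (hLs _ (hx i))).hasFDerivAt
    have h2 := S.phi_nonpos (hLs _ (hx i)) (hLs _ (hx m)) (hm i)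
    rw [← hBa x] at h1
    have h3 := (h1.comp x B.hasFDerivAt).const_mul (1 / (2 * π))
    refine ⟨_, h3.congr_of_eventuallyEq ?_, ?_⟩
    · have o1 : ∀ᶠ y : Fin k → E2 in nhds x, y i ∈ Ω :=
        (continuous_apply i).continuousAt.eventually (hΩo.mem_nhds (hx i))
      filter_upwards [o1] with y h1
      rw [hHe _ h1]
      rfl
    · have hBd : B d = LL.symm P - LL.symm (x i) := by
        rw [hBa]; simp [hd]
      simp only [ContinuousLinearMap.smul_apply, ContinuousLinearMap.comp_apply, hBd, smul_eq_mul]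
      have : 0 < 1 / (2 * π) := by positivity
      rw [hBa]
      exact mul_nonpos_of_nonneg_of_nonpos this.le h2
  have hGd' : ∀ i j, ∃ A : (Fin k → E2) →L[ℝ] ℝ, j ≠ i →
      HasFDerivAt (fun y : Fin k → E2 => G (y i) (y j)) A x ∧ 0 < A d := by
    intro i j
    by_cases h : j ≠ i
    · obtain ⟨A, hA⟩ := hGd i j h
      exact ⟨A, fun _ => hA⟩
    · exact ⟨0, fun h' => absurd h' h⟩
  choose A hA using hGd'
  choose B hB using hHd
  have hWd : HasFDerivAt W (-(∑ i : Fin k, ∑ j ∈ Finset.univ.filter (fun j => j ≠ i),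
      (κ i * κ j) • A i j) + ∑ i : Fin k, ((κ i) ^ 2) • B i) x := by
    rw [show W = _ from funext hW]
    refine HasFDerivAt.fun_add (HasFDerivAt.fun_neg (HasFDerivAt.fun_sum fun i _ =>
      HasFDerivAt.fun_sum fun j hj => ?_)) (HasFDerivAt.fun_sum fun i _ => ?_)
    · exact (hA i j (Finset.mem_filter.1 hj).2).1.const_mul _
    · exact (hB i).1.const_mul _
  have h0 : (-(∑ i : Fin k, ∑ j ∈ Finset.univ.filter (fun j => j ≠ i),
      (κ i * κ j) • A i j) + ∑ i : Fin k, ((κ i) ^ 2) • B i) d = 0 := by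
    rw [← hWd.fderiv, hW0]; rfl
  simp only [ContinuousLinearMap.add_apply, ContinuousLinearMap.neg_apply,
    ContinuousLinearMap.sum_apply, ContinuousLinearMap.smul_apply, smul_eq_mul] at h0
  have h1 : ∑ i : Fin k, (κ i) ^ 2 * B i d ≤ 0 :=
    Finset.sum_nonpos fun i _ => mul_nonpos_of_nonneg_of_nonpos (sq_nonneg _) (hB i).2
  have h2 : 0 < ∑ i : Fin k, ∑ j ∈ Finset.univ.filter (fun j => j ≠ i),
      κ i * κ j * A i j d := by
    refine Finset.sum_pos (fun i _ => Finset.sum_pos (fun j hj => ?_) ?_) Finset.univ_nonempty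
    · exact mul_pos (mul_pos (hκ i) (hκ j)) (hA i j (Finset.mem_filter.1 hj).2).2
    · haveI : Nontrivial (Fin k) := Fin.nontrivial_iff_two_le.2 hk
      obtain ⟨j, hj⟩ := exists_ne i
      exact ⟨j, by simp [hj]⟩
  linarith
end

section
/- Let v ∈ L^∞(ℝ²) ∩ C(ℝ²) be a solution (in the distributional sense) of −Δv = 2 v(1, θ) δ_{|y|=1}, i.e. ∫ ∇v·∇φ = 2∫_{|y|=1} v φ for all φ ∈ C_c^∞(ℝ²). Then v lies in the span of ∂w/∂y₁ and ∂w/∂y₂, where w(y) = (1−|y|²)/4 for |y| ≤ 1 and w(y) = (1/2)ln(1/|y|) for |y| > 1. -/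
open Real Metric MeasureTheory

/-- `∂w/∂y_i` for the radial profile `w`: `−y_i/2` for `|y| ≤ 1` and `−y_i/(2|y|²)` else. -/
noncomputable def dw (i : Fin 2) (y : E2) : ℝ :=
  if ‖y‖ ≤ 1 then -(y i) / 2 else -(y i) / (2 * ‖y‖ ^ 2)


noncomputable def pol (r θ : ℝ) : E2 := !₂[r * Real.cos θ, r * Real.sin θ]

lemma pol_zero' (r θ : ℝ) : pol r θ 0 = r * Real.cos θ := by simp [pol]
lemma pol_one' (r θ : ℝ) : pol r θ 1 = r * Real.sin θ := by simp [pol]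

lemma pol_continuous : Continuous (fun p : ℝ × ℝ => pol p.1 p.2) := by
  unfold pol
  refine (PiLp.continuous_toLp 2 _).comp ?_
  refine continuous_pi ?_
  intro i
  fin_cases i <;> simp <;> fun_prop

lemma pol_norm {r : ℝ} (hr : 0 ≤ r) (θ : ℝ) : ‖pol r θ‖ = r := by
  rw [EuclideanSpace.norm_eq, Fin.sum_univ_two, pol_zero', pol_one']
  rw [← Real.sqrt_sq hr]
  congr 1
  simp only [Real.norm_eq_abs, sq_abs, Real.sqrt_sq hr]
  nlinarith [Real.sin_sq_add_cos_sq θ]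

lemma exists_pol (y : E2) : ∃ θ ∈ Set.Ioc (-π) π, y = pol ‖y‖ θ := by
  refine ⟨Complex.arg ⟨y 0, y 1⟩, Complex.arg_mem_Ioc _, ?_⟩
  have hn : ‖(⟨y 0, y 1⟩ : ℂ)‖ = ‖y‖ := by
    rw [EuclideanSpace.norm_eq, Fin.sum_univ_two, Complex.norm_eq_sqrt_sq_add_sq]
    simp
  ext i
  fin_cases i
  · simp only [Fin.zero_eta, pol_zero']
    rw [← hn, Complex.norm_mul_cos_arg]
  · simp only [Fin.mk_one, pol_one']
    rw [← hn, Complex.norm_mul_sin_arg]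

lemma pol_lip : LipschitzWith 1 (pol 1) := by
  apply LipschitzWith.of_dist_le_mul
  intro s t
  rw [EuclideanSpace.dist_eq, Fin.sum_univ_two]
  simp only [pol_zero', pol_one', NNReal.coe_one, one_mul, Real.dist_eq, sq_abs]
  apply Real.sqrt_le_iff.2 ⟨abs_nonneg _, ?_⟩
  rw [sq_abs]
  have h1 : Real.cos (s - t) = _ := Real.cos_sub s t
  have h2 := Real.one_sub_sq_div_two_le_cos (x := s - t)
  nlinarith [Real.sin_sq_add_cos_sq s, Real.sin_sq_add_cos_sq t]

lemma proj_lip (m : ℝ) : LipschitzWith 1 (fun y : E2 => -Real.sin m * y 0 + Real.cos m * y 1) := by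
  apply LipschitzWith.of_dist_le_mul
  intro x y
  rw [EuclideanSpace.dist_eq, Fin.sum_univ_two]
  simp only [NNReal.coe_one, one_mul, Real.dist_eq, sq_abs]
  apply Real.le_sqrt_of_sq_le
  rw [sq_abs]
  have := Real.sin_sq_add_cos_sq m
  have e : (x 0 - y 0)^2 + (x 1 - y 1)^2 = ((x 0 - y 0)^2 + (x 1 - y 1)^2) * (Real.sin m ^2 + Real.cos m ^2) := by
    rw [this, mul_one]
  rw [e]
  nlinarith [sq_nonneg (Real.cos m * (x 0 - y 0) + Real.sin m * (x 1 - y 1))]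

lemma arc_lower (m δ : ℝ) (h0 : 0 ≤ δ) (h1 : δ ≤ π / 2) :
    ENNReal.ofReal (2 * Real.sin δ) ≤ μH[1] (pol 1 '' Set.Ioc (m - δ) (m + δ)) := by
  have hl := (proj_lip m).hausdorffMeasure_image_le (d := 1) zero_le_one
    (pol 1 '' Set.Ioc (m - δ) (m + δ))
  rw [hausdorffMeasure_real] at hl
  simp only [ENNReal.coe_one, ENNReal.one_rpow, one_mul] at hl
  refine le_trans ?_ hl
  have : Set.Ioc (-Real.sin δ) (Real.sin δ) ⊆ (fun y : E2 => -Real.sin m * y 0 + Real.cos m * y 1) ''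
      (pol 1 '' Set.Ioc (m - δ) (m + δ)) := by
    intro x hx
    have h3 := Real.neg_one_le_sin δ
    have h4 := Real.sin_le_one δ
    refine ⟨_, ⟨m + Real.arcsin x, ⟨?_, ?_⟩, rfl⟩, ?_⟩
    · have : Real.arcsin (Real.sin (-δ)) < Real.arcsin x := by
        rw [Real.sin_neg]
        apply Real.strictMonoOn_arcsin ⟨by linarith, by linarith⟩ ⟨by linarith [hx.1], by linarith [hx.2]⟩ hx.1
      rw [Real.arcsin_sin (by linarith) (by linarith)] at this
      linarith
    · have := Real.monotone_arcsin hx.2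
      rw [Real.arcsin_sin (by linarith) (by linarith)] at this
      linarith
    · simp only [pol_zero', pol_one', one_mul]
      have : Real.sin ((m + Real.arcsin x) - m) = x := by
        rw [add_sub_cancel_left, Real.sin_arcsin (by linarith [hx.1]) (by linarith [hx.2])]
      rw [Real.sin_sub] at this
      linarith
  refine le_trans ?_ (measure_mono this)
  rw [Real.volume_Ioc]
  apply ENNReal.ofReal_le_ofReal; linarith

lemma pol_injOn : Set.InjOn (pol 1) (Set.Ioc (-π) π) := by
  intro s hs t ht h
  have h0 := congrFun (congrArg WithLp.ofLp h) 0
  have h1 := congrFun (congrArg WithLp.ofLp h) 1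
  simp only [pol_zero', pol_one', one_mul] at h0 h1
  have a : Complex.arg (Complex.cos s + Complex.sin s * Complex.I) = s := Complex.arg_cos_add_sin_mul_I hs
  have b : Complex.arg (Complex.cos t + Complex.sin t * Complex.I) = t := Complex.arg_cos_add_sin_mul_I ht
  rw [← a, ← b, ← Complex.ofReal_cos, ← Complex.ofReal_sin, h0, h1]; simp

lemma pol_image : pol 1 '' Set.Ioc (-π) π = sphere (0 : E2) 1 := by
  ext y
  constructor
  · rintro ⟨θ, _, rfl⟩
    simp [pol_norm]
  · intro hy
    have hy' : ‖y‖ = 1 := by simpa using hy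
    obtain ⟨θ, h, e⟩ := exists_pol y
    exact ⟨θ, h, by rw [e]; rw [hy'] ⟩

lemma pol1_measurable : Measurable (pol 1) := pol_lip.continuous.measurable

lemma sphere_lower : ENNReal.ofReal (2 * π) ≤ μH[1] (sphere (0 : E2) 1) := by
  have key : ∀ N : ℕ, ENNReal.ofReal (2 * ((N + 2 : ℕ) * Real.sin (π / (N + 2 : ℕ)))) ≤ μH[1] (sphere (0 : E2) 1) := by
    intro N
    set M := N + 2 with hM
    have hM2 : (2:ℝ) ≤ M := by rw [hM]; push_cast; linarith [(Nat.cast_nonneg N : (0:ℝ) ≤ N)]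
    have hMp : (0:ℝ) < M := by linarith
    set δ := π / M with hδ
    have hδ0 : 0 < δ := by positivity
    have hMδ : M * δ = π := by rw [hδ]; field_simp
    let I : Fin M → Set ℝ := fun k => Set.Ioc ((-π + (2 * (k:ℕ) + 1) * δ) - δ) ((-π + (2 * (k:ℕ) + 1) * δ) + δ)
    have hsub : ∀ k, I k ⊆ Set.Ioc (-π) π := by
      intro k x hx
      have hk : ((k:ℕ):ℝ) + 1 ≤ M := by exact_mod_cast k.2
      have hk0 : (0:ℝ) ≤ (k:ℕ) := Nat.cast_nonneg _
      constructor
      · nlinarith [hx.1]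
      · nlinarith [hx.2]
    have hlt : ∀ i j : Fin M, i < j → Disjoint (I i) (I j) := by
      intro i j hij
      rw [Set.disjoint_left]
      intro x hx hx'
      have hk : ((i:ℕ):ℝ) + 1 ≤ (j:ℕ) := by exact_mod_cast hij
      nlinarith [hx.2, hx'.1]
    have hdis : Pairwise (Function.onFun Disjoint (fun k => pol 1 '' I k)) := by
      intro i j hij
      have : Disjoint (I i) (I j) := by
        rcases lt_or_gt_of_ne hij with h | h
        · exact hlt _ _ h
        · exact (hlt _ _ h).symm
      rw [Function.onFun, Set.disjoint_iff_inter_eq_empty, ← pol_injOn.image_inter (hsub i) (hsub j),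
        this.inter_eq, Set.image_empty]
    have hmeas : ∀ k, MeasurableSet (pol 1 '' I k) := fun k =>
      measurableSet_Ioc.image_of_measurable_injOn pol1_measurable (pol_injOn.mono (hsub k))
    have hU : (⋃ k, pol 1 '' I k) ⊆ sphere (0 : E2) 1 := by
      rw [← pol_image]
      exact Set.iUnion_subset fun k => Set.image_mono (hsub k)
    refine le_trans ?_ (measure_mono hU)
    rw [measure_iUnion hdis hmeas, tsum_fintype]
    have : ∀ k ∈ Finset.univ, ENNReal.ofReal (2 * Real.sin δ) ≤ μH[1] (pol 1 '' I k) := fun k _ =>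
      arc_lower _ _ hδ0.le (by rw [hδ]; apply div_le_div_of_nonneg_left pi_pos.le (by norm_num) hM2)
    refine le_trans (le_of_eq ?_) (Finset.sum_le_sum this)
    rw [Finset.sum_const, Finset.card_univ, Fintype.card_fin, nsmul_eq_mul, ← ENNReal.ofReal_natCast,
      ← ENNReal.ofReal_mul (by positivity)]
    congr 1; ring
  have lim : Filter.Tendsto (fun N : ℕ => 2 * (((N + 2 : ℕ) : ℝ) * Real.sin (π / (N + 2 : ℕ)))) Filter.atTop (nhds (2 * π)) := by
    have h1 : Filter.Tendsto (fun x : ℝ => x⁻¹ * Real.sin (π * x)) (nhdsWithin 0 {0}ᶜ) (nhds π) := by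
      have : HasDerivAt (fun x : ℝ => Real.sin (π * x)) π 0 := by
        have := ((hasDerivAt_id (0:ℝ)).const_mul π).sin
        simpa using this
      have := hasDerivAt_iff_tendsto_slope.1 this
      refine this.congr ?_
      intro x
      simp [slope]
    have h2 : Filter.Tendsto (fun N : ℕ => (((N + 2 : ℕ) : ℝ))⁻¹) Filter.atTop (nhdsWithin 0 {0}ᶜ) := by
      rw [tendsto_nhdsWithin_iff]
      constructor
      · exact (tendsto_inv_atTop_zero.comp tendsto_natCast_atTop_atTop).comp (Filter.tendsto_add_atTop_nat 2)
      · filter_upwards with n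
        simp only [Set.mem_compl_iff, Set.mem_singleton_iff, inv_eq_zero]
        positivity
    have := (h1.comp h2).const_mul 2
    refine this.congr ?_
    intro N
    simp [div_eq_mul_inv]
  exact le_of_tendsto' (ENNReal.tendsto_ofReal lim) key

lemma sphere_measure : (μH[1] : Measure E2).restrict (sphere 0 1) =
    (volume.restrict (Set.Ioc (-π) π)).map (pol 1) := by
  have hle : (μH[1] : Measure E2).restrict (sphere 0 1) ≤ (volume.restrict (Set.Ioc (-π) π)).map (pol 1) := by
    rw [Measure.le_iff]
    intro A hA
    rw [Measure.restrict_apply hA, Measure.map_apply pol1_measurable hA,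
      Measure.restrict_apply (pol1_measurable hA)]
    have : A ∩ sphere 0 1 = pol 1 '' (pol 1 ⁻¹' A ∩ Set.Ioc (-π) π) := by
      rw [Set.image_preimage_inter, pol_image]
    rw [this]
    have := pol_lip.hausdorffMeasure_image_le (d := 1) zero_le_one (pol 1 ⁻¹' A ∩ Set.Ioc (-π) π)
    rw [hausdorffMeasure_real] at this
    simpa using this
  have hu : (volume.restrict (Set.Ioc (-π) π)).map (pol 1) Set.univ = ENNReal.ofReal (2 * π) := by
    rw [Measure.map_apply pol1_measurable MeasurableSet.univ]
    simp only [Set.preimage_univ, Measure.restrict_apply MeasurableSet.univ, Set.univ_inter, Real.volume_Ioc]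
    congr 1; ring
  have hfin : IsFiniteMeasure ((μH[1] : Measure E2).restrict (sphere 0 1)) := by
    constructor
    refine lt_of_le_of_lt (hle Set.univ) ?_
    rw [hu]; exact ENNReal.ofReal_lt_top
  apply Measure.eq_of_le_of_measure_univ_eq hle
  apply le_antisymm (hle _)
  rw [hu]
  simpa using sphere_lower

lemma sphere_integral (f : E2 → ℝ) (hf : Continuous f) :
    ∫ y in sphere (0 : E2) 1, f y ∂μH[1] = ∫ θ in (-π)..π, f (pol 1 θ) := by
  rw [sphere_measure, integral_map pol1_measurable.aemeasurable hf.aestronglyMeasurable,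
    intervalIntegral.integral_of_le (by linarith [pi_pos])]


lemma plane_integral (f : E2 → ℝ) (hf : Continuous f) (hc : HasCompactSupport f) :
    ∫ y, f y = ∫ r in Set.Ioi (0:ℝ), r * ∫ θ in (-π)..π, f (pol r θ) := by
  have e1 : ∫ y, f y = ∫ p : ℝ × ℝ, f (!₂[p.1, p.2]) := by
    have h1 := (EuclideanSpace.volume_preserving_symm_measurableEquiv_toLp (Fin 2))
    have h2 := volume_preserving_finTwoArrow ℝ
    have h3 := h2.comp h1
    rw [← h3.integral_comp (MeasurableEquiv.finTwoArrow.measurableEmbedding.comp (MeasurableEquiv.measurableEmbedding _))]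
    apply integral_congr_ae
    filter_upwards with y
    congr 1
    ext i
    fin_cases i <;> simp
  rw [e1, ← integral_comp_polarCoord_symm, polarCoord_target]
  obtain ⟨R, hR⟩ := hc.isBounded.subset_closedBall 0
  have hz : ∀ r θ, R < r → 0 < r → f (pol r θ) = 0 := by
    intro r θ h h0
    apply image_eq_zero_of_notMem_tsupport
    intro h'
    have := hR h'
    rw [mem_closedBall_zero_iff, pol_norm h0.le] at this
    linarith
  have hcont : Continuous (fun p : ℝ × ℝ => p.1 • f (pol p.1 p.2)) :=
    continuous_fst.smul (hf.comp pol_continuous)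
  have hint : IntegrableOn (fun p : ℝ × ℝ => p.1 • f (pol p.1 p.2)) (Set.Ioi 0 ×ˢ Set.Ioo (-π) π) (volume.prod volume) := by
    have h1 : IntegrableOn (fun p : ℝ × ℝ => p.1 • f (pol p.1 p.2)) (Set.Icc 0 R ×ˢ Set.Icc (-π) π) (volume.prod volume) :=
      hcont.continuousOn.integrableOn_compact (isCompact_Icc.prod isCompact_Icc)
    refine h1.of_forall_sdiff_eq_zero (measurableSet_Ioi.prod measurableSet_Ioo) ?_
    rintro ⟨r, θ⟩ ⟨⟨hr, hθ⟩, hn⟩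
    simp only [Set.mem_Ioi] at hr
    have : R < r := by
      by_contra hcon
      exact hn ⟨⟨hr.le, not_lt.1 hcon⟩, Set.Ioo_subset_Icc_self hθ⟩
    simp [hz r θ this hr]
  have := setIntegral_prod _ hint
  change ∫ p in _, p.1 • f (pol p.1 p.2) ∂(volume.prod volume) = _
  rw [this]
  apply setIntegral_congr_fun measurableSet_Ioi
  intro r hr
  simp only [smul_eq_mul]
  rw [integral_const_mul, intervalIntegral.integral_of_le (by linarith [pi_pos]), integral_Ioc_eq_integral_Ioo]


/-- complex coordinate -/
noncomputable def Zc (y : E2) : ℂ := (y 0 : ℂ) + (y 1 : ℂ) * Complex.I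

noncomputable def ZL : E2 →L[ℝ] ℂ :=
  Complex.ofRealCLM.comp (EuclideanSpace.proj 0) +
    (Complex.I • Complex.ofRealCLM).comp (EuclideanSpace.proj 1)

lemma ZL_apply (y : E2) : ZL y = Zc y := by simp [ZL, Zc, mul_comm]

noncomputable def Nsq (y : E2) : ℝ := y 0 ^ 2 + y 1 ^ 2

lemma Nsq_eq (y : E2) : Nsq y = ‖y‖ ^ 2 := by
  rw [EuclideanSpace.norm_sq_eq, Fin.sum_univ_two]; simp [Nsq]

noncomputable def TT (q : Polynomial ℂ) (h : ℝ → ℝ) (y : E2) : ℝ := (q.eval (Zc y)).re * h (Nsq y)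

lemma Zc_contDiff : ContDiff ℝ (⊤ : ℕ∞) Zc := by
  have : Zc = ZL := by ext y; rw [ZL_apply]
  rw [this]; exact ZL.contDiff

lemma TT_contDiff (q : Polynomial ℂ) (h : ℝ → ℝ) (hh : ContDiff ℝ (⊤ : ℕ∞) h) :
    ContDiff ℝ (⊤ : ℕ∞) (TT q h) := by
  unfold TT
  apply ContDiff.mul
  · have h1 : ContDiff ℝ (⊤ : ℕ∞) (fun z : ℂ => q.eval z) := by
      have := (q.contDiff_aeval (𝕜 := ℂ) (⊤ : ℕ∞)).restrict_scalars ℝ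
      simpa [Polynomial.coe_aeval_eq_eval] using this
    exact Complex.reCLM.contDiff.comp (h1.comp Zc_contDiff)
  · apply hh.comp
    unfold Nsq
    have h0 : ContDiff ℝ (⊤ : ℕ∞) (fun y : E2 => y 0) := (EuclideanSpace.proj (𝕜 := ℝ) (0 : Fin 2)).contDiff
    have h1 : ContDiff ℝ (⊤ : ℕ∞) (fun y : E2 => y 1) := (EuclideanSpace.proj (𝕜 := ℝ) (1 : Fin 2)).contDiff
    exact (h0.pow 2).add (h1.pow 2)

/-- directional derivative of TT -/
lemma TT_fderiv (q : Polynomial ℂ) (h : ℝ → ℝ) (hh : ContDiff ℝ (⊤ : ℕ∞) h) (y e : E2) :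
    fderiv ℝ (TT q h) y e = (Zc e * q.derivative.eval (Zc y)).re * h (Nsq y)
      + (q.eval (Zc y)).re * (deriv h (Nsq y) * (2 * (y 0 * e 0 + y 1 * e 1))) := by
  have hd : DifferentiableAt ℝ (TT q h) y := (TT_contDiff q h hh).differentiable (by simp) y
  have hl : HasDerivAt (fun t : ℝ => y + t • e) e 0 := by
    simpa using ((hasDerivAt_id (0:ℝ)).smul_const e).const_add y
  have h1 : HasDerivAt (fun t : ℝ => TT q h (y + t • e)) (fderiv ℝ (TT q h) y e) 0 := by
    have := hd.hasFDerivAt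
    have h2 : HasFDerivAt (TT q h) (fderiv ℝ (TT q h) y) (y + (0:ℝ) • e) := by simpa using this
    exact h2.comp_hasDerivAt 0 hl
  have hZ : HasDerivAt (fun t : ℝ => Zc (y + t • e)) (Zc e) 0 := by
    have : HasDerivAt (fun t : ℝ => ZL (y + t • e)) (ZL e) 0 :=
      ZL.hasFDerivAt.comp_hasDerivAt 0 hl
    simpa [ZL_apply] using this
  have hq : HasDerivAt (fun t : ℝ => q.eval (Zc (y + t • e))) (q.derivative.eval (Zc y) * Zc e) 0 := by
    have h3 : HasDerivAt (fun z => q.eval z) (q.derivative.eval (Zc (y + (0:ℝ) • e))) (Zc (y + (0:ℝ) • e)) := q.hasDerivAt _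
    have := h3.comp (𝕜 := ℝ) (0:ℝ) hZ
    simp only [zero_smul, add_zero] at this
    exact this
  have hre : HasDerivAt (fun t : ℝ => (q.eval (Zc (y + t • e))).re) (q.derivative.eval (Zc y) * Zc e).re 0 :=
    Complex.reCLM.hasFDerivAt.comp_hasDerivAt (0:ℝ) hq
  have hN : HasDerivAt (fun t : ℝ => Nsq (y + t • e)) (2 * (y 0 * e 0 + y 1 * e 1)) 0 := by
    have : ∀ i : Fin 2, HasDerivAt (fun t : ℝ => (y + t • e) i ^ 2) (2 * (y i * e i)) 0 := by
      intro i
      have := (((hasDerivAt_id (0:ℝ)).mul_const (e i)).const_add (y i)).pow 2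
      simp only [PiLp.add_apply, PiLp.smul_apply, smul_eq_mul]
      convert! this using 1
      simp; ring
    convert! (this 0).add (this 1) using 1
    ring
  have hh' : HasDerivAt (fun t : ℝ => h (Nsq (y + t • e))) (deriv h (Nsq y) * (2 * (y 0 * e 0 + y 1 * e 1))) 0 := by
    have h4 : HasDerivAt h (deriv h (Nsq y)) (Nsq (y + (0:ℝ) • e)) := by
      simpa using ((hh.differentiable (by simp)) (Nsq y)).hasDerivAt
    exact h4.comp (0:ℝ) hN
  have := h1.unique (hre.mul hh')
  rw [this]
  simp [mul_comm]

lemma single_00 : (EuclideanSpace.single (0 : Fin 2) (1:ℝ) : E2) 0 = 1 := by simp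
lemma single_01 : (EuclideanSpace.single (0 : Fin 2) (1:ℝ) : E2) 1 = 0 := by simp
lemma single_10 : (EuclideanSpace.single (1 : Fin 2) (1:ℝ) : E2) 0 = 0 := by simp
lemma single_11 : (EuclideanSpace.single (1 : Fin 2) (1:ℝ) : E2) 1 = 1 := by simp

lemma contDiff_deriv' {h : ℝ → ℝ} (hh : ContDiff ℝ (⊤ : ℕ∞) h) : ContDiff ℝ (⊤ : ℕ∞) (deriv h) :=
  (contDiff_infty_iff_deriv.1 hh).2

lemma TT_lap (q : Polynomial ℂ) (h : ℝ → ℝ) (hh : ContDiff ℝ (⊤ : ℕ∞) h) (y : E2) :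
    lap (TT q h) y = 4 * (Zc y * q.derivative.eval (Zc y)).re * deriv h (Nsq y)
      + (q.eval (Zc y)).re * (4 * deriv h (Nsq y) + 4 * Nsq y * deriv (deriv h) (Nsq y)) := by
  have hh' := contDiff_deriv' hh
  have key : ∀ (e : E2), fderiv ℝ (fun z => fderiv ℝ (TT q h) z e) y e =
      (Zc e * (Zc e * q.derivative.derivative.eval (Zc y))).re * h (Nsq y)
      + 2 * ((Zc e * q.derivative.eval (Zc y)).re * (deriv h (Nsq y) * (2 * (y 0 * e 0 + y 1 * e 1))))
      + (q.eval (Zc y)).re * (deriv (deriv h) (Nsq y) * (2 * (y 0 * e 0 + y 1 * e 1)) ^ 2)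
      + (q.eval (Zc y)).re * (deriv h (Nsq y) * (2 * (e 0 ^ 2 + e 1 ^ 2))) := by
    intro e
    have e1 : (fun z => fderiv ℝ (TT q h) z e) = fun z =>
        TT (Polynomial.C (Zc e) * q.derivative) h z
        + TT q (deriv h) z * (2 * (z 0 * e 0 + z 1 * e 1)) := by
      ext z
      rw [TT_fderiv q h hh]
      simp [TT]; ring
    rw [e1]
    have d1 : DifferentiableAt ℝ (TT (Polynomial.C (Zc e) * q.derivative) h) y :=
      (TT_contDiff _ h hh).differentiable (by simp) y
    have d2 : DifferentiableAt ℝ (TT q (deriv h)) y :=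
      (TT_contDiff _ _ hh').differentiable (by simp) y
    let L : E2 →L[ℝ] ℝ := (2 * e 0) • EuclideanSpace.proj 0 + (2 * e 1) • EuclideanSpace.proj 1
    have hL : ∀ z : E2, L z = 2 * (z 0 * e 0 + z 1 * e 1) := by
      intro z; simp [L]; ring
    simp only [← hL]
    have := (d1.hasFDerivAt.add (d2.hasFDerivAt.mul L.hasFDerivAt)).fderiv
    change fderiv ℝ (TT (Polynomial.C (Zc e) * q.derivative) h + (TT q (deriv h)) * (L : E2 → ℝ)) y e = _
    rw [this]
    simp only [add_apply, smul_apply, smul_eq_mul, TT_fderiv _ h hh, TT_fderiv _ _ hh', hL]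
    simp only [TT, Polynomial.derivative_mul, Polynomial.derivative_C, zero_mul, zero_add,
      Polynomial.eval_mul, Polynomial.eval_C]
    ring
  unfold lap
  rw [Fin.sum_univ_two, key, key]
  simp only [single_00, single_01, single_10, single_11]
  have z0 : Zc (EuclideanSpace.single (0 : Fin 2) (1:ℝ) : E2) = 1 := by simp [Zc]
  have z1 : Zc (EuclideanSpace.single (1 : Fin 2) (1:ℝ) : E2) = Complex.I := by simp [Zc]
  rw [z0, z1]
  simp only [Nsq]
  simp [Zc]
  ring

lemma Zc_pol (r θ : ℝ) : Zc (pol r θ) = r * Complex.exp (θ * Complex.I) := by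
  rw [Zc, pol_zero', pol_one', Complex.exp_mul_I]; push_cast; ring

lemma Nsq_pol (r θ : ℝ) : Nsq (pol r θ) = r ^ 2 := by
  rw [Nsq, pol_zero', pol_one']; nlinarith [Real.sin_sq_add_cos_sq θ]

noncomputable def mode (n : ℕ) (c : ℂ) (θ : ℝ) : ℝ := (c * Complex.exp (θ * Complex.I) ^ n).re

lemma mode_continuous (n : ℕ) (c : ℂ) : Continuous (mode n c) := by
  unfold mode; fun_prop

noncomputable def qn (n : ℕ) (c : ℂ) : Polynomial ℂ := Polynomial.C c * Polynomial.X ^ n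

lemma TT_pol (n : ℕ) (c : ℂ) (h : ℝ → ℝ) (r θ : ℝ) :
    TT (qn n c) h (pol r θ) = r ^ n * h (r ^ 2) * mode n c θ := by
  rw [TT, Nsq_pol, Zc_pol, qn, mode]
  simp only [Polynomial.eval_mul, Polynomial.eval_C, Polynomial.eval_pow, Polynomial.eval_X, mul_pow]
  have : c * ((r:ℂ) ^ n * Complex.exp (θ * Complex.I) ^ n) = ((r ^ n : ℝ) : ℂ) * (c * Complex.exp (θ * Complex.I) ^ n) := by
    push_cast; ring
  rw [this, Complex.re_ofReal_mul]; ring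

lemma TT_lap_pol (n : ℕ) (c : ℂ) (h : ℝ → ℝ) (hh : ContDiff ℝ (⊤ : ℕ∞) h) (r θ : ℝ) :
    lap (TT (qn n c) h) (pol r θ) =
      4 * r ^ n * (r ^ 2 * deriv (deriv h) (r ^ 2) + (n + 1) * deriv h (r ^ 2)) * mode n c θ := by
  rw [TT_lap _ _ hh, Nsq_pol]
  have h1 : ((qn n c).eval (Zc (pol r θ))).re = r ^ n * mode n c θ := by
    simpa [TT] using TT_pol n c (fun _ => 1) r θ
  have h2 : (Zc (pol r θ) * (qn n c).derivative.eval (Zc (pol r θ))).re = n * (r ^ n * mode n c θ) := by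
    rw [← h1, ← Complex.re_ofReal_mul]
    congr 1
    generalize Zc (pol r θ) = z
    rcases n with _ | n
    · simp [qn]
    · simp [qn]; ring
  rw [h1, h2]; ring


noncomputable def BB (v : E2 → ℝ) (n : ℕ) (c : ℂ) (r : ℝ) : ℝ :=
  ∫ θ in (-π)..π, v (pol r θ) * mode n c θ

lemma BB_continuous (v : E2 → ℝ) (hv : Continuous v) (n : ℕ) (c : ℂ) : Continuous (BB v n c) := by
  unfold BB
  apply intervalIntegral.continuous_parametric_intervalIntegral_of_continuous'
  exact (hv.comp pol_continuous).mul ((mode_continuous n c).comp continuous_snd)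

lemma lap_continuous {f : E2 → ℝ} (hf : ContDiff ℝ (⊤ : ℕ∞) f) : Continuous (lap f) := by
  unfold lap
  refine continuous_finsetSum _ fun i _ => ?_
  have h1 : ContDiff ℝ (⊤ : ℕ∞) (fun z => fderiv ℝ f z (EuclideanSpace.single i 1)) :=
    (hf.fderiv_right (m := (⊤ : ℕ∞)) (by simp)).clm_apply contDiff_const
  exact (h1.continuous_fderiv (by simp)).clm_apply continuous_const

lemma lap_support {f : E2 → ℝ} (hf : HasCompactSupport f) : HasCompactSupport (lap f) := by
  have h1 : ∀ i : Fin 2, HasCompactSupport (fun x => fderiv ℝ (fun z => fderiv ℝ f z (EuclideanSpace.single i 1)) x (EuclideanSpace.single i 1)) := by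
    intro i
    exact (hf.fderiv_apply ℝ (EuclideanSpace.single i (1:ℝ) : E2)).fderiv_apply ℝ _
  have : lap f = (fun x => fderiv ℝ (fun z => fderiv ℝ f z (EuclideanSpace.single 0 1)) x (EuclideanSpace.single 0 1)) + (fun x => fderiv ℝ (fun z => fderiv ℝ f z (EuclideanSpace.single 1 1)) x (EuclideanSpace.single 1 1)) := by
    ext x
    simp [lap, Fin.sum_univ_two]
  rw [this]
  exact (h1 0).add (h1 1)

def Weak (v : E2 → ℝ) : Prop := ∀ φ : E2 → ℝ, ContDiff ℝ (⊤ : ℕ∞) φ → HasCompactSupport φ →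
      -(∫ y, v y * lap φ y) = 2 * ∫ y in sphere (0 : E2) 1, v y * φ y ∂μH[1]

lemma radial_weak (v : E2 → ℝ) (hv : Continuous v) (hw : Weak v) (n : ℕ) (c : ℂ) (h : ℝ → ℝ)
    (hh : ContDiff ℝ (⊤ : ℕ∞) h) (M : ℝ) (hM : ∀ s, M ≤ s → h s = 0) :
    ∫ s in Set.Ioi (0:ℝ), (√s ^ n * BB v n c √s) * (s * deriv (deriv h) s + (n + 1) * deriv h s)
      = - (BB v n c 1 * h 1) := by
  have hφ := TT_contDiff (qn n c) h hh
  have hcs : HasCompactSupport (TT (qn n c) h) := by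
    apply HasCompactSupport.of_support_subset_isCompact (isCompact_closedBall (0 : E2) (max M 1))
    intro y hy
    by_contra hcon
    apply hy
    rw [mem_closedBall_zero_iff, not_le, max_lt_iff] at hcon
    have : M ≤ Nsq y := by rw [Nsq_eq]; nlinarith
    simp [TT, hM _ this]
  have key := hw _ hφ hcs
  rw [sphere_integral (fun y => v y * TT (qn n c) h y) (hv.mul hφ.continuous),
    plane_integral (fun y => v y * lap (TT (qn n c) h) y) (hv.mul (lap_continuous hφ))
      (lap_support hcs).mul_left] at key
  have e1 : ∫ θ in (-π)..π, v (pol 1 θ) * TT (qn n c) h (pol 1 θ) = BB v n c 1 * h 1 := by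
    rw [BB, ← intervalIntegral.integral_mul_const]
    congr 1; ext θ
    rw [TT_pol]; simp; ring
  have e2 : ∫ r in Set.Ioi (0:ℝ), r * ∫ θ in (-π)..π, v (pol r θ) * lap (TT (qn n c) h) (pol r θ) =
      ∫ r in Set.Ioi (0:ℝ), ((2:ℝ) * r ^ ((2:ℝ) - 1)) • (fun s => 2 * ((√s ^ n * BB v n c √s) * (s * deriv (deriv h) s + (n + 1) * deriv h s))) (r ^ (2:ℝ)) := by
    apply setIntegral_congr_fun measurableSet_Ioi
    intro r hr
    have hr' : (0:ℝ) ≤ r := le_of_lt hr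
    have : (2:ℝ) - 1 = 1 := by norm_num
    simp only [this, Real.rpow_one, Real.rpow_two, Real.sqrt_sq hr', smul_eq_mul]
    have : ∫ θ in (-π)..π, v (pol r θ) * lap (TT (qn n c) h) (pol r θ) =
       BB v n c r * (4 * r ^ n * (r ^ 2 * deriv (deriv h) (r ^ 2) + (n + 1) * deriv h (r ^ 2))) := by
      rw [BB, ← intervalIntegral.integral_mul_const]
      congr 1; ext θ
      rw [TT_lap_pol _ _ _ hh]; ring
    rw [this]; ring
  have e3 := integral_comp_rpow_Ioi_of_pos (p := 2) (g := (fun s => 2 * ((√s ^ n * BB v n c √s) * (s * deriv (deriv h) s + (n + 1) * deriv h s)))) (by norm_num)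
  rw [e1, e2, e3, integral_const_mul] at key
  linarith

lemma smooth_div (Γ : ℝ → ℝ) (hΓ : ContDiff ℝ (⊤ : ℕ∞) Γ) (ht : tsupport Γ ⊆ Set.Ioi 0) (k : ℕ) :
    ContDiff ℝ (⊤ : ℕ∞) (fun s => Γ s / s ^ k) := by
  rw [contDiff_iff_contDiffAt]
  intro x
  by_cases hx : x ∈ tsupport Γ
  · have : x ≠ 0 := ne_of_gt (ht hx)
    exact hΓ.contDiffAt.div (contDiffAt_id.pow k) (pow_ne_zero _ this)
  · have : (fun s => Γ s / s ^ k) =ᶠ[nhds x] fun _ => 0 := by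
      filter_upwards [(isClosed_tsupport Γ).isOpen_compl.mem_nhds hx] with s hs
      rw [image_eq_zero_of_notMem_tsupport hs, zero_div]
    exact contDiffAt_const.congr_of_eventuallyEq this

lemma primitive_smooth (g : ℝ → ℝ) (hg : ContDiff ℝ (⊤ : ℕ∞) g) (M : ℝ) :
    (∀ s, HasDerivAt (fun s => ∫ t in M..s, g t) (g s) s) ∧ ContDiff ℝ (⊤ : ℕ∞) (fun s => ∫ t in M..s, g t) := by
  have h1 : ∀ s, HasDerivAt (fun s => ∫ t in M..s, g t) (g s) s := fun s =>
    intervalIntegral.integral_hasDerivAt_right (hg.continuous.intervalIntegrable _ _)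
      (hg.continuous.stronglyMeasurableAtFilter _ _) hg.continuous.continuousAt
  refine ⟨h1, ?_⟩
  rw [contDiff_infty_iff_deriv]
  refine ⟨fun s => (h1 s).differentiableAt, ?_⟩
  have : deriv (fun s => ∫ t in M..s, g t) = g := by ext s; exact (h1 s).deriv
  rw [this]; exact hg

lemma compact_bounds (Γ : ℝ → ℝ) (hc : HasCompactSupport Γ) (ht : tsupport Γ ⊆ Set.Ioi 0) :
    ∃ a b : ℝ, 0 < a ∧ a < 1 ∧ 1 < b ∧ ∀ s, s ∉ Set.Ioo a b → Γ s = 0 := by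
  rcases (tsupport Γ).eq_empty_or_nonempty with he | hne
  · refine ⟨1/2, 2, by norm_num, by norm_num, by norm_num, fun s _ => ?_⟩
    apply image_eq_zero_of_notMem_tsupport; rw [he]; simp
  · obtain ⟨x, hx, hxm⟩ := hc.exists_isLeast hne
    obtain ⟨y, hy, hym⟩ := hc.exists_isGreatest hne
    have hx0 : 0 < x := ht hx
    refine ⟨min x 1 / 2, max y 1 + 1, by positivity, ?_, ?_, ?_⟩
    · linarith [min_le_right x 1]
    · linarith [le_max_right y 1]
    · intro s hs
      apply image_eq_zero_of_notMem_tsupport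
      intro hs'
      apply hs
      have h1 := hxm hs'
      have h2 := hym hs'
      have h3 : 0 < min x 1 := by positivity
      constructor
      · linarith [min_le_left x 1]
      · linarith [le_max_left y 1]

/-- du Bois-Reymond -/
lemma dBR (F : ℝ → ℝ) (hF : ContinuousOn F (Set.Ioi 0))
    (H : ∀ Γ : ℝ → ℝ, ContDiff ℝ (⊤ : ℕ∞) Γ → HasCompactSupport Γ → tsupport Γ ⊆ Set.Ioi 0 →
      ∫ s, F s * deriv Γ s = 0) : ∀ s, 0 < s → F s = F 1 := by
  have hint : ∀ g : ℝ → ℝ, Continuous g → HasCompactSupport g → tsupport g ⊆ Set.Ioi 0 →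
      Integrable (fun s => F s * g s) := by
    intro g hg hc ht
    obtain ⟨a, b, ha, _, _, hz⟩ := compact_bounds g hc ht
    have : IntegrableOn (fun s => F s * g s) (Set.Icc a b) :=
      ((hF.mono (fun x hx => lt_of_lt_of_le ha hx.1)).mul hg.continuousOn).integrableOn_compact isCompact_Icc
    refine (integrableOn_iff_integrable_of_support_subset ?_).1 this
    intro s hs
    by_contra hcon
    apply hs
    have := hz s (fun h => hcon (Set.Ioo_subset_Icc_self h))
    simp [this]
  let η₁ : ContDiffBump (1:ℝ) := ⟨1/4, 1/2, by norm_num, by norm_num⟩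
  let η₀ : ℝ → ℝ := η₁.normed volume
  have c0 : ContDiff ℝ (⊤ : ℕ∞) η₀ := η₁.contDiff_normed
  have s0 : HasCompactSupport η₀ := η₁.hasCompactSupport_normed
  have i0 : ∫ x, η₀ x = 1 := η₁.integral_normed
  have t0 : tsupport η₀ ⊆ Set.Ioi 0 := by
    rw [η₁.tsupport_normed_eq]
    intro x hx
    rw [mem_closedBall, Real.dist_eq] at hx
    have h2 : |x - 1| ≤ 1/2 := hx
    have := (abs_le.1 h2).1
    simp only [Set.mem_Ioi]; linarith
  set k := ∫ s, F s * η₀ s with hk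
  have hae : ∀ᵐ x, x ∈ Set.Ioi (0:ℝ) → F x - k = 0 := by
    apply isOpen_Ioi.ae_eq_zero_of_integral_contDiff_smul_eq_zero
      (ContinuousOn.locallyIntegrableOn (hF.sub continuousOn_const) measurableSet_Ioi)
    intro η hη hc ht
    set I := ∫ x, η x with hI
    set κ : ℝ → ℝ := fun s => η s - I * η₀ s with hκ
    have cκ : ContDiff ℝ (⊤ : ℕ∞) κ := hη.sub (contDiff_const.mul c0)
    have intκ : ∫ s, κ s = 0 := by
      rw [hκ, integral_sub (hη.continuous.integrable_of_hasCompactSupport hc)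
        ((c0.continuous.integrable_of_hasCompactSupport s0).const_mul I), integral_const_mul, i0]
      simp [hI]
    obtain ⟨a, b, ha, ha1, hb1, hz⟩ := compact_bounds η hc ht
    obtain ⟨a', b', ha', ha1', hb1', hz'⟩ := compact_bounds η₀ s0 t0
    have zκ : ∀ s, s ∉ Set.Ioo (min a a') (max b b') → κ s = 0 := by
      intro s hs
      have h1 : s ∉ Set.Ioo a b := fun h => hs ⟨(min_le_left _ _).trans_lt h.1, h.2.trans_le (le_max_left _ _)⟩
      have h2 : s ∉ Set.Ioo a' b' := fun h => hs ⟨(min_le_right _ _).trans_lt h.1, h.2.trans_le (le_max_right _ _)⟩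
      simp [hκ, hz s h1, hz' s h2]
    set α := min a a' with hα
    set β := max b b' with hβ
    have hα0 : 0 < α := lt_min ha ha'
    have hαβ : α ≤ β := by
      have := min_le_left a a'; have := le_max_left b b'; linarith
    obtain ⟨hd, hcd⟩ := primitive_smooth κ cκ α
    have hder : deriv (fun s => ∫ t in α..s, κ t) = κ := by ext s; exact (hd s).deriv
    have hfull : ∫ t in α..β, κ t = 0 := by
      rw [intervalIntegral.integral_of_le hαβ, ← intκ]
      apply setIntegral_eq_integral_of_forall_compl_eq_zero
      intro x hx
      exact zκ x (fun h => hx (Set.Ioo_subset_Ioc_self h))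
    have hsupp : Function.support (fun s => ∫ t in α..s, κ t) ⊆ Set.Icc α β := by
      intro s hs
      by_contra hcon
      apply hs
      rw [Set.mem_Icc, not_and_or, not_le, not_le] at hcon
      rcases hcon with h | h
      · apply intervalIntegral.integral_zero_ae
        filter_upwards with t ht
        rw [Set.uIoc_of_ge h.le] at ht
        exact zκ t (fun h' => not_lt.2 ht.2 h'.1)
      · have : ∫ t in β..s, κ t = 0 := by
          apply intervalIntegral.integral_zero_ae
          filter_upwards with t ht
          rw [Set.uIoc_of_le h.le] at ht
          exact zκ t (fun h' => not_lt.2 ht.1.le h'.2)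
        show ∫ t in α..s, κ t = 0
        rw [← intervalIntegral.integral_add_adjacent_intervals (b := β) (cκ.continuous.intervalIntegrable _ _)
          (cκ.continuous.intervalIntegrable _ _), hfull, this, add_zero]
    have := H _ hcd (HasCompactSupport.of_support_subset_isCompact isCompact_Icc hsupp)
      ((closure_minimal hsupp isClosed_Icc).trans (fun x hx => lt_of_lt_of_le hα0 hx.1))
    rw [hder] at this
    have e : ∀ s, F s * κ s = F s * η s - I * (F s * η₀ s) := by intro s; show F s * (η s - I * η₀ s) = _; ring
    simp_rw [e] at this
    rw [integral_sub (hint η hη.continuous hc ht) ((hint η₀ c0.continuous s0 t0).const_mul I),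
      integral_const_mul, ← hk] at this
    have e2 : ∀ s, η s • (F s - k) = F s * η s - k * η s := by intro s; simp; ring
    show ∫ s, η s • (F s - k) = 0
    simp_rw [e2]
    rw [integral_sub (hint η hη.continuous hc ht) ((hη.continuous.integrable_of_hasCompactSupport hc).const_mul k),
      integral_const_mul, ← hI]
    linarith
  have hEq : Set.EqOn F (fun _ => k) (Set.Ioi 0) := by
    apply Measure.eqOn_open_of_ae_eq (μ := volume) _ isOpen_Ioi hF continuousOn_const
    rw [Filter.EventuallyEq, ae_restrict_iff' measurableSet_Ioi]
    filter_upwards [hae] with x hx h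
    linarith [hx h]
  intro s hs
  rw [hEq hs, hEq (show (1:ℝ) ∈ Set.Ioi 0 by simp)]


lemma BB_formula (v : E2 → ℝ) (hv : Continuous v) (hw : Weak v) (n : ℕ) (c : ℂ) (K : ℝ → ℝ)
    (hK : ∀ s, 0 < s → HasDerivAt K (-(s ^ (n + 1))⁻¹) s) (hK1 : K 1 = 0) (r : ℝ) (hr : 0 < r) :
    BB v n c r = r ^ n * (BB v n c 1 * (1 + K (max (r ^ 2) 1))) := by
  set B1 := BB v n c 1 with hB1
  have hBc := BB_continuous v hv n c
  let A : ℝ → ℝ := fun s => √s ^ n * BB v n c √s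
  have hA : Continuous A := (Real.continuous_sqrt.pow n).mul (hBc.comp Real.continuous_sqrt)
  have hK2 : Continuous (fun s => K (max s 1)) := by
    rw [continuous_iff_continuousAt]
    intro s
    have : ContinuousAt K (max s 1) := (hK _ (lt_max_of_lt_right one_pos)).continuousAt
    exact ContinuousAt.comp (f := fun s => max s 1) this (by fun_prop)
  let F : ℝ → ℝ := fun s => A s / s ^ n - B1 * K (max s 1)
  have hA' : ContinuousOn (fun s => A s / s ^ n) (Set.Ioi 0) := by
    apply hA.continuousOn.div (by fun_prop)
    intro s hs
    exact pow_ne_zero _ (ne_of_gt hs)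
  have hF : ContinuousOn F (Set.Ioi 0) := hA'.sub (continuous_const.mul hK2).continuousOn
  have key := dBR F hF (by
    intro Γ hΓ hc ht
    obtain ⟨a, b, ha, ha1, hb1, hz⟩ := compact_bounds Γ hc ht
    have hΓ' := contDiff_deriv' hΓ
    have hz' : ∀ s, s ∉ Set.Icc a b → deriv Γ s = 0 := by
      intro s hs
      by_contra hcon
      apply hs
      have h1 : s ∈ tsupport Γ := support_deriv_subset hcon
      have h2 : Function.support Γ ⊆ Set.Icc a b := by
        intro x hx
        by_contra h
        exact hx (hz x (fun h' => h (Set.Ioo_subset_Icc_self h')))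
      exact closure_minimal h2 isClosed_Icc h1
    set g : ℝ → ℝ := fun s => Γ s / s ^ (n + 1) with hg
    have cg : ContDiff ℝ (⊤ : ℕ∞) g := smooth_div Γ hΓ ht (n + 1)
    obtain ⟨hd, hcd⟩ := primitive_smooth g cg b
    have hder : deriv (fun s => ∫ t in b..s, g t) = g := by ext s; exact (hd s).deriv
    have hvan : ∀ s, b ≤ s → ∫ t in b..s, g t = 0 := by
      intro s hs
      apply intervalIntegral.integral_zero_ae
      filter_upwards with t ht
      rw [Set.uIoc_of_le hs] at ht
      simp [hg, hz t (fun h' => not_lt.2 ht.1.le h'.2)]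
    have rw1 := radial_weak v hv hw n c _ hcd b hvan
    rw [hder] at rw1
    have e1 : ∫ s in Set.Ioi (0:ℝ), (√s ^ n * BB v n c √s) * (s * deriv g s + (n + 1) * g s) =
        ∫ s in Set.Ioi (0:ℝ), A s / s ^ n * deriv Γ s := by
      apply setIntegral_congr_fun measurableSet_Ioi
      intro s hs
      have hs0 : s ≠ 0 := ne_of_gt hs
      have hdg : deriv g s = (deriv Γ s * s ^ (n + 1) - Γ s * ((n + 1 : ℕ) * s ^ n)) / (s ^ (n + 1)) ^ 2 := by
        have h1 : HasDerivAt Γ (deriv Γ s) s := (hΓ.differentiable (by simp) s).hasDerivAt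
        have h2 := h1.div (hasDerivAt_pow (n + 1) s) (pow_ne_zero _ hs0)
        exact h2.deriv
      show A s * (s * deriv g s + (n + 1) * (Γ s / s ^ (n + 1))) = A s / s ^ n * deriv Γ s
      rw [hdg]
      push_cast
      field_simp
      ring
    have e2 : ∫ s in Set.Ioi (0:ℝ), A s / s ^ n * deriv Γ s = ∫ s, A s / s ^ n * deriv Γ s := by
      apply setIntegral_eq_integral_of_forall_compl_eq_zero
      intro s hs
      rw [hz' s (fun h => hs (lt_of_lt_of_le ha h.1)), mul_zero]
    have i1 : Integrable (fun s => A s / s ^ n * deriv Γ s) := by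
      have : IntegrableOn (fun s => A s / s ^ n * deriv Γ s) (Set.Icc a b) :=
        ((hA'.mono (fun x hx => lt_of_lt_of_le ha hx.1)).mul hΓ'.continuous.continuousOn).integrableOn_compact isCompact_Icc
      refine (integrableOn_iff_integrable_of_support_subset ?_).1 this
      intro s hs
      by_contra hcon
      apply hs
      simp [hz' s hcon]
    have i2 : Integrable (fun s => K (max s 1) * deriv Γ s) :=
      (hK2.mul hΓ'.continuous).integrable_of_hasCompactSupport hc.deriv.mul_left
    have e3 : ∫ s, K (max s 1) * deriv Γ s = ∫ s in (1:ℝ)..b, K s * deriv Γ s := by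
      rw [intervalIntegral.integral_of_le hb1.le]
      have : ∫ s in Set.Ioc 1 b, K s * deriv Γ s = ∫ s in Set.Ioc 1 b, K (max s 1) * deriv Γ s := by
        apply setIntegral_congr_fun measurableSet_Ioc
        intro s hs
        simp only [max_eq_left hs.1.le]
      rw [this]
      symm
      apply setIntegral_eq_integral_of_forall_compl_eq_zero
      intro s hs
      by_cases h : s ≤ 1
      · simp [max_eq_right h, hK1]
      · rw [hz' s (fun h' => hs ⟨not_le.1 h, h'.2⟩), mul_zero]
    have e4 : ∫ s in (1:ℝ)..b, K s * deriv Γ s = ∫ s in (1:ℝ)..b, g s := by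
      rw [intervalIntegral.integral_mul_deriv_eq_deriv_mul (v := Γ) (u' := fun s => -(s ^ (n + 1))⁻¹)]
      · rw [hK1, hz b (by simp), zero_mul, mul_zero, sub_zero, zero_sub, ← intervalIntegral.integral_neg]
        congr 1; ext s
        simp [hg, div_eq_mul_inv, mul_comm]
      · intro s hs
        rw [Set.uIcc_of_le hb1.le] at hs
        exact hK s (by linarith [hs.1])
      · intro s _
        exact (hΓ.differentiable (by simp) s).hasDerivAt
      · apply ContinuousOn.intervalIntegrable
        rw [Set.uIcc_of_le hb1.le]
        apply ContinuousOn.neg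
        apply ContinuousOn.inv₀ (by fun_prop)
        intro s hs
        have : 0 < s := by linarith [hs.1]
        positivity
      · exact hΓ'.continuous.intervalIntegrable _ _
    have e5 : ∀ s, F s * deriv Γ s = A s / s ^ n * deriv Γ s - B1 * (K (max s 1) * deriv Γ s) := by
      intro s; simp only [F]; ring
    simp_rw [e5]
    rw [integral_sub i1 (i2.const_mul B1), integral_const_mul, e3, e4, ← e2, ← e1, rw1,
      intervalIntegral.integral_symm]
    ring)
  have hk := key (r ^ 2) (by positivity)
  simp only [F, A, Real.sqrt_sq hr.le, Real.sqrt_one, one_pow, max_self, hK1] at hk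
  have h2 : r ^ n * BB v n c r / (r ^ 2) ^ n = BB v n c r / r ^ n := by
    field_simp
    try ring
  rw [h2, ← hB1] at hk
  have : BB v n c r / r ^ n = B1 * (1 + K (max (r ^ 2) 1)) := by linarith
  rw [← this]; field_simp

lemma BB_bdd (v : E2 → ℝ) (C : ℝ) (hC : ∀ y, |v y| ≤ C) (n : ℕ) (c : ℂ) (r : ℝ) :
    |BB v n c r| ≤ C * ‖c‖ * (2 * π) := by
  have : ‖∫ θ in (-π)..π, v (pol r θ) * mode n c θ‖ ≤ C * ‖c‖ * |π - (-π)| := by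
    apply intervalIntegral.norm_integral_le_of_norm_le_const
    intro θ _
    rw [norm_mul]
    have h1 : |mode n c θ| ≤ ‖c‖ := by
      refine (Complex.abs_re_le_norm _).trans ?_
      rw [norm_mul, norm_pow, Complex.norm_exp_ofReal_mul_I, one_pow, mul_one]
    have h0 := hC (pol r θ)
    exact mul_le_mul h0 h1 (abs_nonneg _) ((abs_nonneg _).trans h0)
  rw [show π - (-π) = 2 * π by ring, abs_of_pos (by positivity)] at this
  exact this

lemma BB_one (v : E2 → ℝ) (hv : Continuous v) (hw : Weak v) (c : ℂ) (r : ℝ) (hr : 0 < r) :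
    BB v 1 c r = (if r ≤ 1 then r else r⁻¹) * BB v 1 c 1 := by
  rw [BB_formula v hv hw 1 c (fun s => s⁻¹ - 1) _ (by simp) r hr]
  · split_ifs with h
    · have : r ^ 2 ≤ 1 := by nlinarith
      simp [max_eq_right this]
    · have : 1 ≤ r ^ 2 := by nlinarith
      simp only [max_eq_left this]; field_simp; ring
  · intro s hs
    simpa using (hasDerivAt_inv hs.ne').sub_const 1

lemma hasDerivAt_K0 (s : ℝ) (hs : 0 < s) :
    HasDerivAt (fun s => -Real.log s) (-(s ^ (0 + 1))⁻¹) s := by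
  have := (Real.hasDerivAt_log hs.ne').fun_neg
  simpa using this

lemma hasDerivAt_Kn (n : ℕ) (hpos : 0 < n) (s : ℝ) (hs : 0 < s) :
    HasDerivAt (fun s : ℝ => ((s ^ n)⁻¹ - 1) / n) (-(s ^ (n + 1))⁻¹) s := by
  have hn0 : (n:ℝ) ≠ 0 := by positivity
  have := (((hasDerivAt_pow n s).inv (pow_ne_zero _ hs.ne')).sub_const 1).div_const (n:ℝ)
  convert! this using 1
  obtain ⟨m, rfl⟩ : ∃ m, n = m + 1 := ⟨n - 1, by omega⟩
  simp only [Nat.add_sub_cancel]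
  have := hs.ne'
  field_simp
  ring

lemma BB_ne_one (v : E2 → ℝ) (hv : Continuous v) (hw : Weak v) (C : ℝ) (hC : ∀ y, |v y| ≤ C)
    (n : ℕ) (hn : n ≠ 1) (c : ℂ) (r : ℝ) (hr : 0 < r) : BB v n c r = 0 := by
  have hbd := BB_bdd v C hC n c
  set D := C * ‖c‖ * (2 * π) with hD
  have hD0 : 0 ≤ D := (abs_nonneg _).trans (hbd 1)
  rcases Nat.eq_zero_or_pos n with rfl | hpos
  · have hf := BB_formula v hv hw 0 c (fun s => -Real.log s) hasDerivAt_K0 (by simp)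
    suffices h : BB v 0 c 1 = 0 by rw [hf r hr, h]; simp
    by_contra hne
    have hp : 0 < |BB v 0 c 1| := abs_pos.2 hne
    set t := D / |BB v 0 c 1| + 1 with ht
    have ht1 : 1 ≤ t := by rw [ht]; linarith [div_nonneg hD0 hp.le]
    have hDt : |BB v 0 c 1| * t = D + |BB v 0 c 1| := by rw [ht]; field_simp
    have h1 := hf (Real.exp t) (Real.exp_pos t)
    have h2 : (1:ℝ) ≤ Real.exp t ^ 2 := one_le_pow₀ (Real.one_le_exp (by linarith))
    rw [max_eq_left h2, Real.log_pow, Real.log_exp] at h1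
    have h3 := hbd (Real.exp t)
    have h5 : 1 + -(((2:ℕ):ℝ) * t) ≤ 0 := by push_cast; linarith
    rw [h1, pow_zero, one_mul, abs_mul, abs_of_nonpos h5] at h3
    push_cast at h3
    nlinarith
  · have hf := BB_formula v hv hw n c (fun s : ℝ => ((s ^ n)⁻¹ - 1) / n) (hasDerivAt_Kn n hpos) (by simp)
    suffices h : BB v n c 1 = 0 by rw [hf r hr, h]; simp
    by_contra hne
    have hp : 0 < |BB v n c 1| := abs_pos.2 hne
    set t := 2 * D / |BB v n c 1| + 1 with ht
    have ht1 : 1 ≤ t := by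
      have : 0 ≤ 2 * D / |BB v n c 1| := by positivity
      linarith
    have hDt : |BB v n c 1| * t = 2 * D + |BB v n c 1| := by rw [ht]; field_simp
    have h1 := hf t (by linarith)
    have h2 : (1:ℝ) ≤ t ^ 2 := one_le_pow₀ ht1
    have hn2 : (2:ℝ) ≤ n := by exact_mod_cast (by omega : 2 ≤ n)
    rw [max_eq_left h2] at h1
    have h4 : 1 / 2 ≤ 1 + (((t ^ 2) ^ n)⁻¹ - 1) / n := by
      have h5 : 0 ≤ ((t ^ 2) ^ n)⁻¹ / n := by positivity
      have h6 : 1 / (n:ℝ) ≤ 1 / 2 := one_div_le_one_div_of_le (by norm_num) hn2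
      rw [sub_div]; linarith
    have h7 : t ≤ t ^ n := le_self_pow₀ ht1 (by omega)
    have h3 := hbd t
    rw [h1, abs_mul, abs_mul, abs_of_nonneg (by positivity : (0:ℝ) ≤ t ^ n), abs_of_nonneg (le_trans (by norm_num) h4)] at h3
    have h8 : t * (|BB v n c 1| * (1 / 2)) ≤ t ^ n * (|BB v n c 1| * (1 + (((t ^ 2) ^ n)⁻¹ - 1) / n)) := by
      gcongr
    nlinarith


instance fact_two_pi_pos' : Fact (0 < 2 * π) := ⟨by positivity⟩

lemma exp_integral (v : E2 → ℝ) (hv : Continuous v) (m : ℕ) (r : ℝ) (σ : ℝ) (hσ : σ = 1 ∨ σ = -1) :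
    ∫ θ in (-π)..π, Complex.exp (σ * m * θ * Complex.I) * (v (pol r θ) : ℂ) =
      (BB v m 1 r : ℂ) + σ * Complex.I * (BB v m (-Complex.I) r : ℂ) := by
  have hc : Continuous (fun θ => v (pol r θ)) := hv.comp (pol_continuous.comp (by fun_prop : Continuous fun θ : ℝ => (r, θ)))
  have e : ∀ θ : ℝ, Complex.exp (σ * m * θ * Complex.I) * (v (pol r θ) : ℂ) =
      ((v (pol r θ) * mode m 1 θ : ℝ) : ℂ) + σ * Complex.I * ((v (pol r θ) * mode m (-Complex.I) θ : ℝ) : ℂ) := by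
    intro θ
    have hm : Complex.exp (θ * Complex.I) ^ m = Complex.exp ((m * θ : ℝ) * Complex.I) := by
      rw [← Complex.exp_nat_mul]; congr 1; push_cast; ring
    have h1 : mode m 1 θ = Real.cos (m * θ) := by
      rw [mode, hm, one_mul, Complex.exp_ofReal_mul_I_re]
    have h2 : mode m (-Complex.I) θ = Real.sin (m * θ) := by
      rw [mode, hm]
      simp only [neg_mul, Complex.neg_re, Complex.I_mul_re, neg_neg]
      rw [Complex.exp_ofReal_mul_I_im]
    rw [h1, h2]
    have h3 : Complex.exp (σ * m * θ * Complex.I) = Real.cos (m * θ) + σ * Real.sin (m * θ) * Complex.I := by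
      have : (σ * m * θ * Complex.I : ℂ) = ((σ * (m * θ) : ℝ) : ℂ) * Complex.I := by push_cast; ring
      rw [this, Complex.exp_mul_I, ← Complex.ofReal_cos, ← Complex.ofReal_sin]
      rcases hσ with rfl | rfl
      · simp
      · simp
    rw [h3]; push_cast; ring
  simp_rw [e]
  rw [intervalIntegral.integral_add, intervalIntegral.integral_const_mul, intervalIntegral.integral_ofReal, intervalIntegral.integral_ofReal]
  · rfl
  · exact (Complex.continuous_ofReal.comp (hc.mul (mode_continuous _ _))).intervalIntegrable _ _
  · exact (continuous_const.mul (Complex.continuous_ofReal.comp (hc.mul (mode_continuous _ _)))).intervalIntegrable _ _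

lemma fourier_concl (v : E2 → ℝ) (hv : Continuous v) (r : ℝ)
    (h0 : ∀ n, n ≠ 1 → ∀ c, BB v n c r = 0) (θ : ℝ) :
    v (pol r θ) = (1 / π) * (BB v 1 1 r * Real.cos θ + BB v 1 (-Complex.I) r * Real.sin θ) := by
  have hc : Continuous (fun θ => v (pol r θ)) := hv.comp (pol_continuous.comp (by fun_prop : Continuous fun θ : ℝ => (r, θ)))
  have hper : Function.Periodic (fun θ => (v (pol r θ) : ℂ)) (2 * π) := by
    intro θ
    simp [pol]
  have hcl : Continuous hper.lift := by
    rw [(QuotientAddGroup.isQuotientMap_mk (AddSubgroup.zmultiples (2 * π))).continuous_iff]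
    exact Complex.continuous_ofReal.comp hc
  let f : C(AddCircle (2 * π), ℂ) := ⟨hper.lift, hcl⟩
  have coef : ∀ (m : ℕ) (σ : ℝ) (n : ℤ), (σ = 1 ∨ σ = -1) → (-(n:ℝ)) = σ * m →
      fourierCoeff f n = (1 / (2 * π)) • ((BB v m 1 r : ℂ) + σ * Complex.I * (BB v m (-Complex.I) r : ℂ)) := by
    intro m σ n hσ hn
    rw [fourierCoeff_eq_intervalIntegral f n (-π), show -π + 2 * π = π by ring, ← exp_integral v hv m r σ hσ]
    congr 1
    apply intervalIntegral.integral_congr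
    intro x _
    have hn' : (-(n:ℂ)) = σ * m := by exact_mod_cast hn
    simp only [smul_eq_mul]
    congr 1
    rw [fourier_coe_apply]
    congr 1
    push_cast
    rw [hn']
    have : (π:ℂ) ≠ 0 := by exact_mod_cast pi_ne_zero
    field_simp
  have hz : ∀ n : ℤ, n ∉ ({1, -1} : Finset ℤ) → fourierCoeff f n = 0 := by
    intro n hn
    simp only [Finset.mem_insert, Finset.mem_singleton, not_or] at hn
    have hne : n.natAbs ≠ 1 := by omega
    rcases Int.natAbs_eq n with h | h
    · rw [coef n.natAbs (-1) n (Or.inr rfl) (by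
        have : (n:ℝ) = ((n.natAbs : ℤ) : ℝ) := congrArg _ h
        rw [neg_one_mul, this, Int.cast_natCast]), h0 _ hne, h0 _ hne]; simp
    · rw [coef n.natAbs 1 n (Or.inl rfl) (by
        have : (n:ℝ) = ((-(n.natAbs : ℤ) : ℤ) : ℝ) := congrArg _ h
        rw [one_mul, this, Int.cast_neg, neg_neg, Int.cast_natCast]), h0 _ hne, h0 _ hne]; simp
  have hs : Summable (fourierCoeff f) := summable_of_ne_finset_zero (s := {1, -1}) (fun n hn => hz n hn)
  have h1 := has_pointwise_sum_fourier_series_of_summable hs (θ : AddCircle (2 * π))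
  have h2 : HasSum (fun i => fourierCoeff f i • (fourier i) (θ : AddCircle (2 * π)))
      (∑ i ∈ ({1, -1} : Finset ℤ), fourierCoeff f i • (fourier i) (θ : AddCircle (2 * π))) := by
    apply hasSum_sum_of_ne_finset_zero
    intro n hn
    rw [hz n hn, zero_smul]
  have h3 := h1.unique h2
  rw [Finset.sum_pair (by norm_num), coef 1 (-1) 1 (Or.inr rfl) (by simp), coef 1 1 (-1) (Or.inl rfl) (by simp),
    fourier_coe_apply, fourier_coe_apply] at h3
  have hf : f (θ : AddCircle (2 * π)) = (v (pol r θ) : ℂ) := rfl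
  have hpi : (π:ℂ) ≠ 0 := by exact_mod_cast pi_ne_zero
  have a1 : (2 * π * Complex.I * ((1:ℤ):ℂ) * θ / ((2 * π : ℝ) : ℂ) : ℂ) = θ * Complex.I := by
    push_cast; field_simp
  have a2 : (2 * π * Complex.I * ((-1:ℤ):ℂ) * θ / ((2 * π : ℝ) : ℂ) : ℂ) = ((-θ : ℝ) : ℂ) * Complex.I := by
    push_cast; field_simp
  rw [hf, a1, a2, Complex.exp_mul_I, Complex.exp_mul_I, ← Complex.ofReal_cos, ← Complex.ofReal_sin,
    ← Complex.ofReal_cos, ← Complex.ofReal_sin] at h3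
  have h4 := congrArg Complex.re h3
  simp [-Complex.ofReal_cos, -Complex.ofReal_sin] at h4
  rw [h4]
  field_simp
  ring

/-- nondegeneracy of the linearized vortex patch operator:
any bounded continuous distributional solution of `−Δv = 2 v δ_{|y|=1}` is a linear
combination of `∂w/∂y₁` and `∂w/∂y₂`. -/
theorem stmt12 (v : E2 → ℝ) (hbdd : ∃ C : ℝ, ∀ y, |v y| ≤ C) (hcont : Continuous v)
    (hweak : ∀ φ : E2 → ℝ, ContDiff ℝ (⊤ : ℕ∞) φ → HasCompactSupport φ →
      -(∫ y, v y * lap φ y) = 2 * ∫ y in sphere (0 : E2) 1, v y * φ y ∂μH[1]) :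
    ∃ c₁ c₂ : ℝ, ∀ y, v y = c₁ * dw 0 y + c₂ * dw 1 y := by
  obtain ⟨C, hC⟩ := hbdd
  have hw : Weak v := hweak
  set b₁ := BB v 1 1 1 with hb1
  set b₂ := BB v 1 (-Complex.I) 1 with hb2
  have main : ∀ r θ, 0 < r → v (pol r θ) =
      (1 / π) * (if r ≤ 1 then r else r⁻¹) * (b₁ * Real.cos θ + b₂ * Real.sin θ) := by
    intro r θ hr
    rw [fourier_concl v hcont r (fun n hn c => BB_ne_one v hcont hw C hC n hn c r hr) θ,
      BB_one v hcont hw _ r hr, BB_one v hcont hw _ r hr]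
    ring
  refine ⟨-2 / π * b₁, -2 / π * b₂, fun y => ?_⟩
  by_cases hy : y = 0
  · have hy0 : v 0 = 0 := by
      have hc : Continuous (fun r => v (pol r 0) - (1 / π) * r * b₁) :=
        (hcont.comp (pol_continuous.comp (by fun_prop : Continuous fun r : ℝ => (r, (0:ℝ))))).sub (by fun_prop)
      have h1 : Filter.Tendsto (fun r => v (pol r 0) - (1 / π) * r * b₁) (nhdsWithin 0 (Set.Ioi 0))
          (nhds (v (pol 0 0) - (1 / π) * 0 * b₁)) := hc.continuousAt.tendsto.mono_left nhdsWithin_le_nhds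
      have h2 : Filter.Tendsto (fun r => v (pol r 0) - (1 / π) * r * b₁) (nhdsWithin 0 (Set.Ioi 0)) (nhds 0) := by
        apply tendsto_const_nhds.congr'
        filter_upwards [Ioo_mem_nhdsGT (zero_lt_one (α := ℝ))] with r hr
        rw [main r 0 hr.1, if_pos hr.2.le]; simp
      have h3 := tendsto_nhds_unique h1 h2
      have h4 : pol 0 0 = 0 := by ext i; fin_cases i <;> simp [pol]
      rw [h4] at h3
      simpa using h3
    rw [hy, hy0]; simp [dw]
  · have hr : 0 < ‖y‖ := norm_pos_iff.2 hy
    obtain ⟨θ, _, e⟩ := exists_pol y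
    have h0 : y 0 = ‖y‖ * Real.cos θ := by conv_lhs => rw [e, pol_zero']
    have h1 : y 1 = ‖y‖ * Real.sin θ := by conv_lhs => rw [e, pol_one']
    have h2 := main ‖y‖ θ hr
    rw [← e] at h2
    rw [h2]
    unfold dw
    rw [h0, h1]
    split_ifs
    · field_simp
    · field_simp
end
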